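/- arXiv:1509.02106 — 4 statements merged into one kernel-verified Lean document; each statement's English description precedes it below -/
import Mathlib

section
/- Let f ∈ ℂ[x,y,z,w] be a reduced homogeneous polynomial of degree d defining a surface D: f = 0 in P³ which is tame with respect to a pair of syzygies ρ1, ρ2 of degrees e1 = deg ρ1 ≤ e2 = deg ρ2. Set e3 = d − 1 − e1 − e2 and assume e3 ≥ e2. Then for every integer k with 0 ≤ k < e3 + d − 1, the dimension of the degree-k part of the Milnor algebra satisfies m(f)_k = binom(k+3,3) − 4·binom(k−d+4,3) + binom(k−d−e1+4,3) + binom(k−d−e2+4,3), where binom(m,3) is understood to be 0 when m < 3. In particular these dimensions depend only on d, e1 and e2. -/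
open MvPolynomial Matrix

noncomputable section

/-- The polynomial ring `S = ℂ[x,y,z,w]`. -/
abbrev S4 : Type := MvPolynomial (Fin 4) ℂ

/-- The `S`-linear map sending `ρ = (α,β,γ,δ)` to `α fₓ + β f_y + γ f_z + δ f_w`. -/
def jacPair (f : S4) : (Fin 4 → S4) →ₗ[S4] S4 where
  toFun ρ := ∑ i, ρ i * pderiv i f
  map_add' a b := by simp [add_mul, Finset.sum_add_distrib]
  map_smul' c a := by simp [Finset.mul_sum, mul_assoc]

/-- `AR(f)`: the `S`-module of all Jacobian syzygies of `f`. -/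
def AR4 (f : S4) : Submodule S4 (Fin 4 → S4) := LinearMap.ker (jacPair f)

/-- A vector of polynomials is homogeneous of degree `q` if each component is. -/
def VecHomog (ρ : Fin 4 → S4) (q : ℕ) : Prop := ∀ i, (ρ i).IsHomogeneous q

/-- `AR(f)_k`, the degree-`k` homogeneous part of `AR(f)`, as a `ℂ`-subspace. -/
def ARgr (f : S4) (k : ℕ) : Submodule ℂ (Fin 4 → S4) :=
  (AR4 f).restrictScalars ℂ ⊓ Submodule.pi Set.univ (fun _ => homogeneousSubmodule (Fin 4) ℂ k)

/-- `ar(f)_k = dim_ℂ AR(f)_k`. -/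
def arDim (f : S4) (k : ℕ) : ℕ := Module.finrank ℂ (ARgr f k)

/-- `ar(f)_q` for an integer index, with the convention that it vanishes for `q < 0`. -/
def arZ (f : S4) (q : ℤ) : ℕ := if 0 ≤ q then arDim f q.toNat else 0

/-- The Jacobian ideal of `f`. -/
def JacIdeal (f : S4) : Ideal S4 := Ideal.span (Set.range fun i : Fin 4 => pderiv i f)

/-- `m(f)_k = dim_ℂ M(f)_k`, the dimension of the degree-`k` part of the Milnor algebra. -/
def milnor4 (f : S4) (k : ℕ) : ℕ :=
  Module.finrank ℂ ((homogeneousSubmodule (Fin 4) ℂ k).map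
    (Submodule.mkQ ((JacIdeal f).restrictScalars ℂ)))

/-- `binom(m,3)` with the convention that it is `0` for `m < 3`. -/
def binom3 (m : ℤ) : ℕ := m.toNat.choose 3

/-- All four `3×3` minors of the `3×4` matrix with rows `ρ1, ρ2, ρ` vanish. -/
def MinorsVanish3 (ρ1 ρ2 ρ : Fin 4 → S4) : Prop :=
  ∀ j : Fin 4,
    (Matrix.of fun i k => ![ρ1, ρ2, ρ] i (j.succAbove k) : Matrix (Fin 3) (Fin 3) S4).det = 0

/-- `D : f = 0` is tame with respect to `ρ1, ρ2`: every homogeneous syzygy `ρ` for which all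
`3×3` minors of the matrix with rows `ρ1, ρ2, ρ` vanish lies in `S·ρ1 + S·ρ2`. -/
def TamePair (f : S4) (ρ1 ρ2 : Fin 4 → S4) : Prop :=
  ∀ ρ ∈ AR4 f, ∀ q : ℕ, VecHomog ρ q → MinorsVanish3 ρ1 ρ2 ρ →
    ∃ a b : S4, ρ = a • ρ1 + b • ρ2

/-- `ρ1` is a nonzero homogeneous syzygy of minimal degree `e1`, and `ρ2` is a homogeneous
syzygy of minimal degree `e2 ≥ e1` among the homogeneous syzygies not in `S·ρ1`. -/
def MinimalPair (f : S4) (ρ1 ρ2 : Fin 4 → S4) (e1 e2 : ℕ) : Prop :=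
  ρ1 ∈ AR4 f ∧ ρ1 ≠ 0 ∧ VecHomog ρ1 e1 ∧
  (∀ ρ ∈ AR4 f, ∀ q : ℕ, ρ ≠ 0 → VecHomog ρ q → e1 ≤ q) ∧
  ρ2 ∈ AR4 f ∧ VecHomog ρ2 e2 ∧ e1 ≤ e2 ∧ (∀ a : S4, ρ2 ≠ a • ρ1) ∧
  (∀ ρ ∈ AR4 f, ∀ q : ℕ, VecHomog ρ q → (∀ a : S4, ρ ≠ a • ρ1) → e2 ≤ q)

/-- `D : f = 0` is a free surface with exponents `d1 ≤ d2 ≤ d3`: `AR(f)` is a free graded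
`S`-module with a homogeneous basis of degrees `d1, d2, d3`. -/
def IsFreeWith (f : S4) (d1 d2 d3 : ℕ) : Prop :=
  d1 ≤ d2 ∧ d2 ≤ d3 ∧
  ∃ ρ1 ρ2 ρ3 : Fin 4 → S4,
    ρ1 ∈ AR4 f ∧ ρ2 ∈ AR4 f ∧ ρ3 ∈ AR4 f ∧
    VecHomog ρ1 d1 ∧ VecHomog ρ2 d2 ∧ VecHomog ρ3 d3 ∧
    (∀ ρ ∈ AR4 f, ∃ a b c : S4, ρ = a • ρ1 + b • ρ2 + c • ρ3) ∧
    (∀ a b c : S4, a • ρ1 + b • ρ2 + c • ρ3 = 0 → a = 0 ∧ b = 0 ∧ c = 0)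

/-- `D : f = 0` is a nearly free surface with exponents `d1 ≤ d2 ≤ d3` (`d4 = d3`):
`AR(f)` is generated by four homogeneous syzygies of degrees `d1, d2, d3, d3`,
with `d3 = d - (d1 + d2)`, whose module of relations is generated by a single relation
`a₁ρ₁ + a₂ρ₂ + a₃ρ₃ + a₄ρ₄ = 0` with `a₁, a₂, a₃, a₄` homogeneous of degrees
`d3-d1+1, d3-d2+1, 1, 1`. -/
def IsNearlyFreeWith (f : S4) (d d1 d2 d3 : ℕ) : Prop :=
  d1 ≤ d2 ∧ d2 ≤ d3 ∧ d1 + d2 + d3 = d ∧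
  ∃ (ρ : Fin 4 → Fin 4 → S4) (a : Fin 4 → S4),
    (∀ i, ρ i ∈ AR4 f) ∧
    VecHomog (ρ 0) d1 ∧ VecHomog (ρ 1) d2 ∧ VecHomog (ρ 2) d3 ∧ VecHomog (ρ 3) d3 ∧
    (∀ σ ∈ AR4 f, ∃ b : Fin 4 → S4, σ = ∑ i, b i • ρ i) ∧
    (a 0).IsHomogeneous (d3 - d1 + 1) ∧ (a 1).IsHomogeneous (d3 - d2 + 1) ∧
    (a 2).IsHomogeneous 1 ∧ (a 3).IsHomogeneous 1 ∧
    a ≠ 0 ∧ (∑ i, a i • ρ i) = 0 ∧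
    (∀ b : Fin 4 → S4, (∑ i, b i • ρ i) = 0 → ∃ c : S4, b = c • a)

/-- `D : f = 0` is tame: it is tame with respect to some pair `ρ1, ρ2` chosen as in the paper. -/
def IsTame (f : S4) : Prop :=
  ∃ (ρ1 ρ2 : Fin 4 → S4) (e1 e2 : ℕ), MinimalPair f ρ1 ρ2 e1 e2 ∧ TamePair f ρ1 ρ2

/-- The `4×4` matrix with rows the Euler vector field `(x,y,z,w)` and `ρ1, ρ2, ρ`. -/
def EMat (ρ1 ρ2 ρ : Fin 4 → S4) : Matrix (Fin 4) (Fin 4) S4 :=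
  Matrix.of ![fun i => X i, ρ1, ρ2, ρ]

/-- The degree-`m` part of `S` for an integer index `m` (zero for `m < 0`). -/
def Hz (m : ℤ) : Submodule ℂ S4 :=
  if 0 ≤ m then homogeneousSubmodule (Fin 4) ℂ m.toNat else ⊥

/-- The projection of `S` to its degree-`m` part. -/
def pz (m : ℤ) : S4 →ₗ[ℂ] S4 :=
  if 0 ≤ m then homogeneousComponent m.toNat else 0

lemma pz_mem (m : ℤ) (p : S4) : pz m p ∈ Hz m := by
  unfold pz Hz
  split_ifs
  · exact homogeneousComponent_isHomogeneous _ _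
  · simp

lemma Hz_nat (n : ℕ) : Hz (n : ℤ) = homogeneousSubmodule (Fin 4) ℂ n := by
  simp [Hz]

lemma comp_mul {g : S4} {e : ℕ} (hg : g.IsHomogeneous e) (k : ℕ) (c : S4) :
    homogeneousComponent k (c * g) = pz ((k : ℤ) - e) c * g := by
  induction c using MvPolynomial.induction_on' with
  | monomial m r =>
    have h1 : (monomial m r : S4).IsHomogeneous m.degree := isHomogeneous_monomial r rfl
    rw [homogeneousComponent_of_mem (h1.mul hg)]
    unfold pz
    by_cases h : k = m.degree + e
    · subst h
      have : (0 : ℤ) ≤ ((m.degree + e : ℕ) : ℤ) - e := by omega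
      rw [if_pos rfl, if_pos this]
      have h2 : (((m.degree + e : ℕ) : ℤ) - e).toNat = m.degree := by omega
      rw [h2, homogeneousComponent_of_mem h1, if_pos rfl]
    · rw [if_neg h]
      split_ifs with h3
      · rw [homogeneousComponent_of_mem h1, if_neg (by omega), zero_mul]
      · simp
  | add p q hp hq => simp [add_mul, map_add, hp, hq]

lemma Hz_mul {g : S4} {e : ℕ} (hg : g.IsHomogeneous e) {k : ℕ} {c : S4}
    (hc : c ∈ Hz ((k : ℤ) - e)) : (c * g).IsHomogeneous k := by
  unfold Hz at hc
  split_ifs at hc with h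
  · have := IsHomogeneous.mul hc hg
    rwa [show ((k : ℤ) - e).toNat + e = k by omega] at this
  · rw [Submodule.mem_bot] at hc
    rw [hc, zero_mul]
    exact isHomogeneous_zero _ _ _

instance finiteH (n : ℕ) : Module.Finite ℂ (homogeneousSubmodule (Fin 4) ℂ n) :=
  Module.Finite.iff_fg.mpr (homogeneousSubmodule_fg _ _ _)

lemma Hz_of_neg {m : ℤ} (h : ¬ 0 ≤ m) : Hz m = ⊥ := by
  simp only [Hz, if_neg h]

instance finiteHz (m : ℤ) : Module.Finite ℂ (Hz m) := by
  by_cases h : 0 ≤ m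
  · obtain ⟨n, rfl⟩ := Int.eq_ofNat_of_zero_le h
    rw [Hz_nat]
    infer_instance
  · rw [Hz_of_neg h]
    infer_instance

lemma finrank_H (n : ℕ) :
    Module.finrank ℂ (homogeneousSubmodule (Fin 4) ℂ n) = (n + 3).choose 3 := by
  rw [homogeneousSubmodule_eq_finsupp_supported]
  have e : {d : Fin 4 →₀ ℕ | d.degree = n} =
      ((Finset.univ : Finset (Fin 4)).finsuppAntidiag n : Set (Fin 4 →₀ ℕ)) := by
    ext d
    simp [Finsupp.degree_eq_sum]
  rw [e]
  rw [(AddMonoidAlgebra.supportedEquivFinsupp (R := ℂ) (S := ℂ) _).finrank_eq,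
    Module.finrank_finsupp_self]
  rw [show Fintype.card ((Finset.univ : Finset (Fin 4)).finsuppAntidiag n : Set (Fin 4 →₀ ℕ)) =
    ((Finset.univ : Finset (Fin 4)).finsuppAntidiag n).card by simp]
  rw [Finset.card_finsuppAntidiag_nat_eq_choose]
  simp only [Finset.card_univ, Fintype.card_fin]
  rw [show 4 + n - 1 = n + 3 by omega]
  exact Nat.choose_symm_add

lemma finrank_Hz (m : ℤ) : Module.finrank ℂ (Hz m) = binom3 (m + 3) := by
  unfold binom3
  by_cases h : 0 ≤ m
  · obtain ⟨n, rfl⟩ := Int.eq_ofNat_of_zero_le h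
    rw [Hz_nat, finrank_H, show ((n : ℤ) + 3).toNat = n + 3 by omega]
  · rw [Hz_of_neg h, Nat.choose_eq_zero_of_lt (by omega), finrank_bot]

lemma const_of_pderiv_zero {p : S4} (h : ∀ i, pderiv i p = 0) : p.totalDegree = 0 := by
  rw [totalDegree_eq_zero_iff]
  intro m hm i
  by_contra hi
  have h1 := coeff_pderiv (i := i) p (m - Finsupp.single i 1)
  rw [h i] at h1
  have h2 : m - Finsupp.single i 1 + Finsupp.single i 1 = m := by
    refine tsub_add_cancel_of_le ?_
    simpa using Nat.one_le_iff_ne_zero.mpr hi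
  rw [h2, coeff_zero] at h1
  rcases mul_eq_zero.mp h1.symm with h3 | h3
  · exact (mem_support_iff.mp hm) h3
  · exact Nat.cast_add_one_ne_zero _ h3

lemma pderiv_zero_of_dvd {p : S4} (i : Fin 4) (h : p ∣ pderiv i p) : pderiv i p = 0 := by
  by_contra h0
  obtain ⟨c, hc⟩ := h
  have hp0 : p ≠ 0 := by rintro rfl; simp at h0
  have hc0 : c ≠ 0 := by rintro rfl; simp [hc] at h0
  have h1 : p.totalDegree ≤ (pderiv i p).totalDegree := by
    rw [hc, totalDegree_mul_of_isDomain hp0 hc0]; omega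
  have hne : (pderiv i p).support.Nonempty := support_nonempty.mpr h0
  obtain ⟨m, hm, hm2⟩ := Finset.exists_mem_eq_sup _ hne (fun s => s.sum fun _ e => e)
  have h3 : m + Finsupp.single i 1 ∈ p.support := by
    rw [mem_support_iff] at hm ⊢
    intro h4
    rw [coeff_pderiv, h4, zero_mul] at hm
    exact hm rfl
  have h4 := le_totalDegree h3
  rw [Finsupp.sum_add_index' (by simp) (by simp), Finsupp.sum_single_index rfl] at h4
  have : (pderiv i p).totalDegree = m.sum fun _ e => e := hm2
  omega

/-- If `f` is squarefree and divides `D * f_i` for all `i`, and `deg D < deg f`, then `D = 0`. -/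
lemma eq_zero_of_dvd {f D : S4} {d : ℕ} (hf : f.IsHomogeneous d)
    (hred : Squarefree f) (hD : D ≠ 0 → D.totalDegree < d)
    (h : ∀ i, f ∣ D * pderiv i f) : D = 0 := by
  by_contra hD0
  have hf0 : f ≠ 0 := hred.ne_zero
  have hfd : f.totalDegree = d := hf.totalDegree hf0
  obtain ⟨u, v, c, huv, hcu, hcv⟩ := UniqueFactorizationMonoid.exists_reduced_factors f hf0 D
  have hc0 : c ≠ 0 := by rintro rfl; simp at hcu; exact hf0 hcu.symm
  have hu0 : u ≠ 0 := by rintro rfl; simp at hcu; exact hf0 hcu.symm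
  have hv0 : v ≠ 0 := by rintro rfl; simp at hcv; exact hD0 hcv.symm
  have hu : ¬ IsUnit u := by
    intro hu
    have h1 : u.totalDegree = 0 := by
      obtain ⟨r, _, rfl⟩ := MvPolynomial.isUnit_iff_eq_C_of_isReduced.mp hu
      simp
    have h2 := totalDegree_mul_of_isDomain hc0 hu0
    have h3 := totalDegree_mul_of_isDomain hc0 hv0
    rw [hcu] at h2
    rw [hcv] at h3
    have := hD hD0
    omega
  have hdvd : ∀ i, u ∣ pderiv i f := by
    intro i
    have h1 := h i
    rw [← hcv] at h1
    nth_rewrite 1 [← hcu] at h1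
    rw [mul_assoc] at h1
    have h2 := (mul_dvd_mul_iff_left hc0).mp h1
    exact huv.dvd_of_dvd_mul_left h2
  obtain ⟨p, hp, hpu⟩ := WfDvdMonoid.exists_irreducible_factor hu hu0
  obtain ⟨w, hw⟩ : p ∣ f := hpu.trans ⟨c, by rw [← hcu, mul_comm]⟩
  have hpw : ¬ p ∣ w := by
    rintro ⟨t, rfl⟩
    exact hp.not_isUnit (hred p ⟨t, by rw [hw, mul_assoc]⟩)
  have hpd : ∀ i, pderiv i p = 0 := by
    intro i
    apply pderiv_zero_of_dvd
    have h1 := hpu.trans (hdvd i)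
    rw [hw, pderiv_mul] at h1
    have h2 : p ∣ pderiv i p * w := (dvd_add_left (dvd_mul_right _ _)).mp h1
    exact (hp.prime.dvd_or_dvd h2).resolve_right hpw
  have h1 := const_of_pderiv_zero hpd
  rw [totalDegree_eq_zero_iff_eq_C] at h1
  apply hp.not_isUnit
  rw [h1]
  apply IsUnit.map
  rw [isUnit_iff_ne_zero]
  intro h2
  rw [h2, C_0] at h1
  exact hp.ne_zero h1

lemma mem_AR4 {f : S4} {ρ : Fin 4 → S4} : ρ ∈ AR4 f ↔ ∑ i, ρ i * pderiv i f = 0 := Iff.rfl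

lemma exists_pderiv_ne {f : S4} {d : ℕ} (hd : 1 ≤ d) (hf : f.IsHomogeneous d) (hf0 : f ≠ 0) :
    ∃ i, pderiv i f ≠ 0 := by
  by_contra! h
  have h1 := hf.sum_X_mul_pderiv
  simp only [h, mul_zero, Finset.sum_const_zero] at h1
  rcases smul_eq_zero.mp h1.symm with h2 | h2
  · omega
  · exact hf0 h2

/-- The determinant of a matrix with homogeneous rows is homogeneous. -/
lemma det_homog {M : Matrix (Fin 4) (Fin 4) S4} {n : Fin 4 → ℕ}
    (h : ∀ i j, (M i j).IsHomogeneous (n i)) : M.det.IsHomogeneous (∑ i, n i) := by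
  rw [← Matrix.det_transpose, Matrix.det_apply]
  apply IsHomogeneous.sum
  intro σ _
  have h1 : (∏ i, Mᵀ (σ i) i).IsHomogeneous (∑ i, n i) :=
    IsHomogeneous.prod _ _ _ (fun i _ => h i (σ i))
  exact (homogeneousSubmodule (Fin 4) ℂ _).smul_of_tower_mem _ h1

/-- Saito-type argument: low degree syzygies have vanishing minors with `ρ1, ρ2`. -/
lemma minors_vanish {f : S4} {d e1 e2 e3 q : ℕ} {ρ1 ρ2 ρ : Fin 4 → S4}
    (hd : 1 ≤ d) (hf : f.IsHomogeneous d) (hred : Squarefree f)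
    (h1 : ρ1 ∈ AR4 f) (h2 : ρ2 ∈ AR4 f) (h : ρ ∈ AR4 f)
    (v1 : VecHomog ρ1 e1) (v2 : VecHomog ρ2 e2) (v : VecHomog ρ q)
    (he3 : e1 + e2 + e3 + 1 = d) (hq : q < e3) : MinorsVanish3 ρ1 ρ2 ρ := by
  have hf0 : f ≠ 0 := hred.ne_zero
  set M := EMat ρ1 ρ2 ρ with hM
  have hMf : M *ᵥ (fun i => pderiv i f) = Pi.single 0 (d • f) := by
    funext i
    have hE := hf.sum_X_mul_pderiv
    rw [mem_AR4] at h h1 h2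
    fin_cases i
    · simpa [hM, EMat, Matrix.mulVec, dotProduct] using hE
    · simpa [hM, EMat, Matrix.mulVec, dotProduct] using h1
    · simpa [hM, EMat, Matrix.mulVec, dotProduct] using h2
    · simpa [hM, EMat, Matrix.mulVec, dotProduct] using h
  have hadj : ∀ i, M.det * pderiv i f = M.adjugate i 0 * (d • f) := by
    intro i
    have h3 : M.adjugate *ᵥ (M *ᵥ (fun i => pderiv i f)) = M.det • (fun i => pderiv i f) := by
      rw [Matrix.mulVec_mulVec, Matrix.adjugate_mul, Matrix.smul_mulVec, Matrix.one_mulVec]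
    rw [hMf] at h3
    have h4 := congrFun h3 i
    rw [Matrix.mulVec_single] at h4
    simpa [mul_comm] using h4.symm
  have hdet : M.det = 0 := by
    apply eq_zero_of_dvd hf hred
    · intro h0
      have h5 : M.det.IsHomogeneous (∑ i, ![1, e1, e2, q] i) := by
        apply det_homog
        intro i j
        fin_cases i
        · exact isHomogeneous_X _ _
        · exact v1 j
        · exact v2 j
        · exact v j
      rw [h5.totalDegree h0]
      simp [Fin.sum_univ_four]
      omega
    · intro i
      rw [hadj i]
      exact Dvd.dvd.mul_left (by rw [nsmul_eq_mul]; exact dvd_mul_left _ _) _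
  have hadj0 : ∀ i, M.adjugate i 0 = 0 := by
    intro i
    have h3 := hadj i
    rw [hdet, zero_mul] at h3
    refine (mul_eq_zero.mp h3.symm).resolve_right ?_
    exact smul_ne_zero (by omega) hf0
  intro j
  have h3 := hadj0 j
  rw [Matrix.adjugate_fin_succ_eq_det_submatrix] at h3
  have h4 : (M.submatrix (Fin.succAbove 0) (Fin.succAbove j)).det = 0 := by
    refine (mul_eq_zero.mp h3).resolve_left ?_
    exact pow_ne_zero _ (by norm_num)
  rw [← h4]
  congr 1

/-- `ρ1` and `ρ2` are independent over `S`. -/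
lemma indep {f : S4} {d e1 e2 : ℕ} {ρ1 ρ2 : Fin 4 → S4}
    (hd : 1 ≤ d) (hf : f.IsHomogeneous d) (hred : Squarefree f)
    (hmin : MinimalPair f ρ1 ρ2 e1 e2) (htame : TamePair f ρ1 ρ2)
    {a b : S4} (hab : a • ρ1 + b • ρ2 = 0) : a = 0 ∧ b = 0 := by
  obtain ⟨-, hρ1, -⟩ := hmin
  have hb : b = 0 := by
    by_contra hb
    obtain ⟨i, hi⟩ := exists_pderiv_ne hd hf hred.ne_zero
    have key : ∀ j, j ≠ i → ∃ c : S4,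
        b • ((Pi.single i (pderiv j f) - Pi.single j (pderiv i f) : Fin 4 → S4)) = c • ρ1 := by
      intro j hj
      obtain ⟨s, t, hst⟩ := htame (Pi.single i (pderiv j f) - Pi.single j (pderiv i f)) (by
          rw [mem_AR4]
          simp only [Pi.sub_apply, sub_mul, Finset.sum_sub_distrib, Pi.single_apply, ite_mul,
            zero_mul, Finset.sum_ite_eq', Finset.mem_univ, if_true]
          ring) (d - 1) (by
          intro l
          simp only [Pi.sub_apply, Pi.single_apply]
          apply IsHomogeneous.sub
          · split_ifs
            · exact hf.pderiv
            · exact isHomogeneous_zero _ _ _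
          · split_ifs
            · exact hf.pderiv
            · exact isHomogeneous_zero _ _ _) (by
          intro l
          rw [← Matrix.exists_vecMul_eq_zero_iff]
          refine ⟨![a, b, 0], ?_, ?_⟩
          · intro h0
            exact hb (congrFun h0 1)
          · funext m
            have := congrFun hab (l.succAbove m)
            simpa [Matrix.vecMul, dotProduct, Fin.sum_univ_three] using this)
      refine ⟨b * s - t * a, ?_⟩
      rw [hst]
      funext l
      have := congrFun hab l
      simp only [Pi.add_apply, Pi.smul_apply, smul_eq_mul, Pi.zero_apply] at this ⊢
      linear_combination t * this
    obtain ⟨j, k, hj, hk, hjk⟩ : ∃ j k : Fin 4, j ≠ i ∧ k ≠ i ∧ j ≠ k := by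
      clear key hi; revert i; decide
    obtain ⟨c, hc⟩ := key j hj
    obtain ⟨c', hc'⟩ := key k hk
    have e1 := congrFun hc j
    have e2 := congrFun hc k
    have e3 := congrFun hc' k
    simp [hj, hk, hjk.symm] at e1 e2 e3
    rcases e2 with e2 | e2
    · rw [e2, zero_mul, neg_eq_zero] at e1
      exact mul_ne_zero hb hi e1
    · rw [e2, mul_zero, neg_eq_zero] at e3
      exact mul_ne_zero hb hi e3
  refine ⟨?_, hb⟩
  rw [hb, zero_smul, add_zero] at hab
  exact (smul_eq_zero.mp hab).resolve_right hρ1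

/-- The map `S_q^4 → S`, `ρ ↦ ∑ ρ_i f_i`. -/
def phiMap (f : S4) (q : ℤ) : (Fin 4 → Hz q) →ₗ[ℂ] S4 where
  toFun ρ := ∑ i, (ρ i : S4) * pderiv i f
  map_add' a b := by simp [add_mul, Finset.sum_add_distrib]
  map_smul' c a := by simp [Finset.smul_sum]

/-- The map `S_m × S_n → S^4`, `(a, b) ↦ a ρ1 + b ρ2`. -/
def psiMap (ρ1 ρ2 : Fin 4 → S4) (m n : ℤ) : (Hz m × Hz n) →ₗ[ℂ] (Fin 4 → S4) where
  toFun p := (p.1 : S4) • ρ1 + (p.2 : S4) • ρ2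
  map_add' a b := by simp only [Prod.fst_add, Prod.snd_add, Submodule.coe_add, add_smul]; abel
  map_smul' c a := by simp

/-- The inclusion `S_q^4 → S^4`. -/
def inclMap (q : ℤ) : (Fin 4 → Hz q) →ₗ[ℂ] (Fin 4 → S4) where
  toFun ρ := fun i => (ρ i : S4)
  map_add' _ _ := rfl
  map_smul' _ _ := rfl

lemma range_phi {f : S4} {d : ℕ} (hd : 1 ≤ d) (hf : f.IsHomogeneous d) (k : ℕ) :
    LinearMap.range (phiMap f ((k : ℤ) - d + 1)) =
      homogeneousSubmodule (Fin 4) ℂ k ⊓ (JacIdeal f).restrictScalars ℂ := by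
  have hq : (k : ℤ) - d + 1 = (k : ℤ) - (d - 1 : ℕ) := by omega
  rw [hq]
  ext x
  constructor
  · rintro ⟨ρ, rfl⟩
    refine ⟨?_, ?_⟩
    · exact IsHomogeneous.sum _ _ _ (fun i _ => Hz_mul hf.pderiv (ρ i).2)
    · change ∑ i, (ρ i : S4) * pderiv i f ∈ JacIdeal f
      exact Ideal.sum_mem _ (fun i _ => Ideal.mul_mem_left _ _ (Ideal.subset_span ⟨i, rfl⟩))
  · rintro ⟨hx, hJ⟩
    obtain ⟨c, hc⟩ := (Ideal.mem_span_range_iff_exists_fun).mp hJ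
    refine ⟨fun i => ⟨pz _ (c i), pz_mem _ _⟩, ?_⟩
    rw [← homogeneousComponent_eq_self hx, ← hc, map_sum]
    change ∑ i, pz _ (c i) * pderiv i f = _
    exact Finset.sum_congr rfl (fun i _ => (comp_mul hf.pderiv k (c i)).symm)

lemma milnor_add (f : S4) (k : ℕ) :
    milnor4 f k + Module.finrank ℂ
      ↥(homogeneousSubmodule (Fin 4) ℂ k ⊓ (JacIdeal f).restrictScalars ℂ) = (k + 3).choose 3 := by
  rw [← finrank_H k]
  set J := (JacIdeal f).restrictScalars ℂ
  set H := homogeneousSubmodule (Fin 4) ℂ k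
  have h := LinearMap.finrank_range_add_finrank_ker (J.mkQ.domRestrict H)
  rw [LinearMap.range_domRestrict, LinearMap.ker_domRestrict, Submodule.ker_mkQ] at h
  rw [← h]
  congr 1
  rw [← Submodule.map_comap_subtype, Submodule.finrank_map_subtype_eq]

/-- Low degree syzygies are combinations of `ρ1, ρ2` with homogeneous coefficients. -/
lemma syz_low {f : S4} {d e1 e2 e3 : ℕ} {ρ1 ρ2 : Fin 4 → S4}
    (hd : 1 ≤ d) (hf : f.IsHomogeneous d) (hred : Squarefree f)
    (hmin : MinimalPair f ρ1 ρ2 e1 e2) (htame : TamePair f ρ1 ρ2)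
    (he3 : e1 + e2 + e3 + 1 = d) {q : ℤ} (hq : q < e3) :
    (LinearMap.ker (phiMap f q)).map (inclMap q) =
      LinearMap.range (psiMap ρ1 ρ2 (q - e1) (q - e2)) := by
  obtain ⟨h1, -, v1, -, h2, v2, -⟩ := hmin
  by_cases h0 : 0 ≤ q
  · obtain ⟨n, rfl⟩ := Int.eq_ofNat_of_zero_le h0
    ext ρ
    constructor
    · rintro ⟨σ, hσ, rfl⟩
      have hv : VecHomog (inclMap n σ) n := by
        intro i
        have h3 : ∀ x ∈ Hz (n : ℤ), x.IsHomogeneous n := by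
          rw [Hz_nat]
          exact fun _ hx => hx
        exact h3 _ (σ i).2
      have hA : inclMap n σ ∈ AR4 f := hσ
      obtain ⟨a, b, hab⟩ := htame _ hA n hv
        (minors_vanish hd hf hred h1 h2 hA v1 v2 hv he3 (by omega))
      refine ⟨(⟨pz _ a, pz_mem _ _⟩, ⟨pz _ b, pz_mem _ _⟩), ?_⟩
      funext i
      rw [← homogeneousComponent_eq_self (hv i), hab]
      simp only [Pi.add_apply, Pi.smul_apply, smul_eq_mul, map_add]
      rw [comp_mul (v1 i), comp_mul (v2 i)]
      rfl
    · rintro ⟨⟨a, b⟩, rfl⟩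
      have hv : ∀ i, psiMap ρ1 ρ2 _ _ (a, b) i ∈ Hz (n : ℤ) := by
        intro i
        rw [Hz_nat]
        exact IsHomogeneous.add (Hz_mul (v1 i) a.2) (Hz_mul (v2 i) b.2)
      refine ⟨fun i => ⟨_, hv i⟩, ?_, rfl⟩
      have : psiMap ρ1 ρ2 _ _ (a, b) ∈ AR4 f :=
        (AR4 f).add_mem ((AR4 f).smul_mem _ h1) ((AR4 f).smul_mem _ h2)
      exact this
  · have hb : ∀ m : ℤ, m < 0 → ∀ x : Hz m, x = 0 := by
      intro m hm x
      have h3 : ∀ y ∈ Hz m, y = 0 := by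
        rw [Hz_of_neg (by omega)]
        exact fun _ hy => (Submodule.mem_bot _).mp hy
      exact Subtype.ext (h3 _ x.2)
    trans ⊥
    · rw [Submodule.eq_bot_iff]
      rintro _ ⟨σ, -, rfl⟩
      have : σ = 0 := funext fun i => hb _ (by omega) _
      rw [this, map_zero]
    · symm
      rw [Submodule.eq_bot_iff]
      rintro _ ⟨⟨a, b⟩, rfl⟩
      rw [hb _ (by omega) a, hb _ (by omega) b]
      exact map_zero _

/-- **Theorem 1.3 (1).** For a tame surface `D : f = 0` with syzygy degrees `e1 ≤ e2`,
`e3 = d - 1 - e1 - e2 ≥ e2`, and any `k < e3 + d - 1`, the dimension of the degree-`k`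
piece of the Milnor algebra is given by a binomial formula depending only on `d, e1, e2`. -/
theorem thm_1_3_part1 (f : S4) (d e1 e2 e3 : ℕ) (ρ1 ρ2 : Fin 4 → S4)
    (hd : 1 ≤ d) (hf : f.IsHomogeneous d) (hred : Squarefree f)
    (hmin : MinimalPair f ρ1 ρ2 e1 e2) (htame : TamePair f ρ1 ρ2)
    (he3 : e1 + e2 + e3 + 1 = d) (he23 : e2 ≤ e3) :
    ∀ k : ℕ, (k : ℤ) < (e3 : ℤ) + d - 1 →
      (milnor4 f k : ℤ) =
        (binom3 ((k : ℤ) + 3) : ℤ) - 4 * binom3 ((k : ℤ) - d + 4) +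
          ((binom3 ((k : ℤ) - d - e1 + 4) : ℤ) + (binom3 ((k : ℤ) - d - e2 + 4) : ℤ)) := by
  intro k hk
  set q : ℤ := (k : ℤ) - d + 1 with hq
  have hqe : q < e3 := by omega
  have hmil : milnor4 f k + Module.finrank ℂ (LinearMap.range (phiMap f q)) =
      (k + 3).choose 3 := by
    rw [hq, range_phi hd hf k]
    exact milnor_add f k
  have hrn : Module.finrank ℂ (LinearMap.range (phiMap f q)) +
      Module.finrank ℂ (LinearMap.ker (phiMap f q)) = Module.finrank ℂ (Fin 4 → Hz q) :=
    LinearMap.finrank_range_add_finrank_ker (phiMap f q)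
  have hker : Module.finrank ℂ (LinearMap.ker (phiMap f q)) =
      binom3 (q - e1 + 3) + binom3 (q - e2 + 3) := by
    have hinj : Function.Injective (inclMap q) := by
      intro a b hab
      funext i
      exact Subtype.ext (congrFun hab i)
    have hpsi : Function.Injective (psiMap ρ1 ρ2 (q - e1) (q - e2)) := by
      rw [injective_iff_map_eq_zero]
      rintro ⟨a, b⟩ hab
      obtain ⟨ha, hb⟩ := indep hd hf hred hmin htame hab
      exact Prod.ext (Subtype.ext ha) (Subtype.ext hb)
    rw [← finrank_Hz, ← finrank_Hz, ← Module.finrank_prod, ← LinearMap.finrank_range_of_inj hpsi,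
      ← syz_low hd hf hred hmin htame he3 hqe]
    exact (Submodule.equivMapOfInjective _ hinj _).finrank_eq
  rw [hker, Module.finrank_pi_fintype] at hrn
  simp only [finrank_Hz, Finset.sum_const, Finset.card_univ, Fintype.card_fin,
    smul_eq_mul] at hrn
  have b0 : binom3 ((k : ℤ) + 3) = (k + 3).choose 3 := by
    unfold binom3
    congr 1
  rw [b0, show (k : ℤ) - d + 4 = q + 3 by omega, show (k : ℤ) - d - e1 + 4 = q - e1 + 3 by omega,
    show (k : ℤ) - d - e2 + 4 = q - e2 + 3 by omega]
  omega
end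
end

section
/- Let f ∈ ℂ[x,y,z,w] be a reduced homogeneous polynomial of degree d defining a surface D: f = 0 in P³ which is tame with respect to a pair of syzygies ρ1, ρ2 of degrees e1 = deg ρ1 ≤ e2 = deg ρ2, and assume e1 + 2e2 ≤ d − 1 and that the singular locus Σ of D is 1-dimensional, i.e., there exist integers a, b with m(f)_k = a·k + b for all sufficiently large k, and deg Σ = a. Set e3 = d − 1 − e1 − e2, s1 = e1 + e2 + e3 and s2 = e1e2 + e1e3 + e2e3. Then deg Σ ≤ s1² − s2, and equality holds if and only if D is a free surface (with exponents e1, e2, e3). -/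
open MvPolynomial Matrix

noncomputable section

lemma hc_mul (m : ℕ) {F : S4} (hF : F.IsHomogeneous m) (q : ℕ) (g : S4) :
    homogeneousComponent (q + m) (g * F) = homogeneousComponent q g * F := by
  conv_lhs => rw [← sum_homogeneousComponent g, Finset.sum_mul, map_sum]
  have key : ∀ i, homogeneousComponent (q + m) (homogeneousComponent i g * F)
      = if i = q then homogeneousComponent q g * F else 0 := by
    intro i
    rw [homogeneousComponent_of_mem
      ((mem_homogeneousSubmodule _ _).2 ((homogeneousComponent_isHomogeneous i g).mul hF))]
    by_cases h : i = q
    · subst h; simp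
    · rw [if_neg (by omega), if_neg h]
  rw [Finset.sum_congr rfl (fun i _ => key i), Finset.sum_ite_eq']
  split_ifs with h
  · rfl
  · rw [homogeneousComponent_eq_zero, zero_mul]
    simpa using h

lemma hc_mul_lt (m : ℕ) {F : S4} (hF : F.IsHomogeneous m) (q : ℕ) (hq : q < m) (g : S4) :
    homogeneousComponent q (g * F) = 0 := by
  conv_lhs => rw [← sum_homogeneousComponent g, Finset.sum_mul, map_sum]
  refine Finset.sum_eq_zero fun i _ => ?_
  rw [homogeneousComponent_of_mem
      ((mem_homogeneousSubmodule _ _).2 ((homogeneousComponent_isHomogeneous i g).mul hF)),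
      if_neg (by omega)]

lemma homog_of_hc {g : S4} {n : ℕ} (h : ∀ q, q ≠ n → homogeneousComponent q g = 0) :
    g.IsHomogeneous n := by
  rw [← sum_homogeneousComponent g]
  refine IsHomogeneous.sum _ _ _ fun i _ => ?_
  by_cases hi : i = n
  · subst hi; exact homogeneousComponent_isHomogeneous i g
  · rw [h i hi]; exact isHomogeneous_zero _ _ _

lemma homog_div {m n : ℕ} {F g : S4} (hF : F.IsHomogeneous m) (hF0 : F ≠ 0)
    (h : (g * F).IsHomogeneous (n + m)) : g.IsHomogeneous n := by
  refine homog_of_hc fun q hq => ?_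
  have h1 := hc_mul m hF q g
  rw [homogeneousComponent_of_mem ((mem_homogeneousSubmodule _ _).2 h), if_neg (by omega)] at h1
  exact (mul_eq_zero.1 h1.symm).resolve_right hF0

lemma homog_div_lt {m n : ℕ} {F g : S4} (hF : F.IsHomogeneous m) (hF0 : F ≠ 0) (hnm : n < m)
    (h : (g * F).IsHomogeneous n) : g = 0 := by
  have : g * F = 0 := by
    rw [← homogeneousComponent_eq_self ((mem_homogeneousSubmodule _ _).2 h)]
    exact hc_mul_lt m hF n hnm g
  exact (mul_eq_zero.1 this).resolve_right hF0

/-- homogeneous component of a vector -/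
def vcomp (k : ℕ) (ρ : Fin 4 → S4) : Fin 4 → S4 := fun i => homogeneousComponent k (ρ i)

lemma vcomp_homog (k : ℕ) (ρ : Fin 4 → S4) : VecHomog (vcomp k ρ) k :=
  fun i => homogeneousComponent_isHomogeneous k (ρ i)

lemma vcomp_self {k : ℕ} {ρ : Fin 4 → S4} (h : VecHomog ρ k) : vcomp k ρ = ρ :=
  funext fun i => homogeneousComponent_eq_self ((mem_homogeneousSubmodule _ _).2 (h i))

lemma vcomp_sum (ρ : Fin 4 → S4) : ∃ N, ρ = ∑ k ∈ Finset.range N, vcomp k ρ := by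
  refine ⟨(Finset.univ.sup fun i => (ρ i).totalDegree) + 1, ?_⟩
  funext i
  rw [Finset.sum_apply]
  conv_lhs => rw [← sum_homogeneousComponent (ρ i)]
  refine Finset.sum_subset ?_ ?_
  · intro k hk
    have : (ρ i).totalDegree ≤ Finset.univ.sup fun i => (ρ i).totalDegree :=
      Finset.le_sup (f := fun i => (ρ i).totalDegree) (Finset.mem_univ i)
    simp only [Finset.mem_range] at hk ⊢
    omega
  · intro k _ hk
    refine homogeneousComponent_eq_zero _ _ ?_
    simpa using hk

lemma vcomp_smul {m : ℕ} {σ : Fin 4 → S4} (hσ : VecHomog σ m) (q : ℕ) (a : S4) :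
    vcomp (q + m) (a • σ) = homogeneousComponent q a • σ :=
  funext fun i => hc_mul m (hσ i) q a

lemma vcomp_add (k : ℕ) (a b : Fin 4 → S4) : vcomp k (a + b) = vcomp k a + vcomp k b :=
  funext fun i => by simp [vcomp]

lemma lin_eq (L : (Fin 4 → S4) →ₗ[S4] S4) (ρ : Fin 4 → S4) :
    L ρ = ∑ i, ρ i * L (Pi.single i 1) := by
  conv_lhs => rw [LinearMap.pi_apply_eq_sum_univ L ρ]
  refine Finset.sum_congr rfl fun i _ => ?_
  rw [smul_eq_mul]; congr 2
  funext j
  by_cases h : i = j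
  · subst h; simp
  · simp [h, Ne.symm h]

lemma L_vcomp {L : (Fin 4 → S4) →ₗ[S4] S4} {m : ℕ}
    (hL : ∀ i, (L (Pi.single i 1)).IsHomogeneous m) (k : ℕ) (ρ : Fin 4 → S4) :
    L (vcomp k ρ) = homogeneousComponent (k + m) (L ρ) := by
  rw [lin_eq L ρ, lin_eq L, map_sum]
  exact Finset.sum_congr rfl fun i _ => (hc_mul m (hL i) k (ρ i)).symm

lemma jac_single (f : S4) (i : Fin 4) : jacPair f (Pi.single i 1) = pderiv i f := by
  simp [jacPair, Pi.single_apply]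

lemma vcomp_AR {f : S4} {d : ℕ} (hf : f.IsHomogeneous d) {ρ : Fin 4 → S4} (h : ρ ∈ AR4 f)
    (k : ℕ) : vcomp k ρ ∈ AR4 f := by
  have h0 : jacPair f ρ = 0 := h
  change jacPair f (vcomp k ρ) = 0
  rw [L_vcomp (m := d - 1) (fun i => by rw [jac_single]; exact hf.pderiv), h0, map_zero]

lemma AR_div {f : S4} {u : S4} (hu : u ≠ 0) {σ : Fin 4 → S4} (h : u • σ ∈ AR4 f) :
    σ ∈ AR4 f := by
  have h0 : jacPair f (u • σ) = 0 := h
  rw [map_smul, smul_eq_mul] at h0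
  exact (mul_eq_zero.1 h0).resolve_left hu

lemma pderiv_not_dvd {p : S4} {i : Fin 4} (h : pderiv i p ≠ 0) : ¬ p ∣ pderiv i p := by
  intro hd
  have h1 := totalDegree_le_of_dvd_of_isDomain hd h
  obtain ⟨m, hm, hmd⟩ := Finset.exists_mem_eq_sup (pderiv i p).support (by simpa using h)
    (fun s : Fin 4 →₀ ℕ => s.sum fun _ e => e)
  rw [mem_support_iff, coeff_pderiv] at hm
  have hm2 : m + Finsupp.single i 1 ∈ p.support := by
    rw [mem_support_iff]; exact left_ne_zero_of_mul hm
  have h2 := le_totalDegree hm2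
  have h3 : (pderiv i p).totalDegree = m.sum fun _ e => e := hmd
  rw [Finsupp.sum_add_index' (by simp) (by simp), Finsupp.sum_single_index rfl] at h2
  omega

lemma exists_pderiv_ne_s2 {p : S4} (h : ∀ c, p ≠ C c) : ∃ i, pderiv i p ≠ 0 := by
  by_contra hc
  push Not at hc
  refine h (coeff 0 p) ?_
  ext m
  rw [coeff_C]
  split_ifs with hm
  · rw [hm]
  · have : ∃ i, m i ≠ 0 := by
      by_contra h0; push Not at h0
      exact hm (Finsupp.ext fun i => by simp [h0 i])
    obtain ⟨i, hi⟩ := this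
    have h1 := coeff_pderiv (i := i) p (m - Finsupp.single i 1)
    rw [hc i, coeff_zero] at h1
    have h2 : m - Finsupp.single i 1 + Finsupp.single i 1 = m := by
      ext j
      by_cases hj : i = j
      · subst hj; simp; omega
      · simp [hj]
    rw [h2] at h1
    refine (mul_eq_zero.1 h1.symm).resolve_right ?_
    exact Nat.cast_add_one_ne_zero _

/-- the partial derivatives have no common prime factor -/
lemma no_common_prime {f : S4} {d : ℕ} (hd : 1 ≤ d) (hf : f.IsHomogeneous d) (hred : Squarefree f)
    {π : S4} (hπ : Prime π) (h : ∀ i, π ∣ pderiv i f) : False := by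
  have h1 : π ∣ f := by
    have : π ∣ (d : S4) * f := by
      rw [← nsmul_eq_mul, ← hf.sum_X_mul_pderiv]
      exact Finset.dvd_sum fun i _ => (h i).mul_left _
    have hdu : IsUnit (d : S4) := by
      have : (d : S4) = C (d : ℂ) := by simp
      rw [this]
      exact (isUnit_iff_ne_zero.2 (by exact_mod_cast (by omega : d ≠ 0))).map C
    exact (hdu.dvd_mul_left).1 this
  obtain ⟨g, hg⟩ := h1
  obtain ⟨i, hi⟩ := exists_pderiv_ne_s2 (p := π) (by
    intro c hc
    by_cases h0 : c = 0
    · exact hπ.ne_zero (by simp [hc, h0])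
    · exact hπ.not_isUnit (hc ▸ (isUnit_iff_ne_zero.2 h0).map C))
  have h2 := h i
  rw [hg, pderiv_mul] at h2
  have h3 : π ∣ pderiv i π * g := (dvd_add_left (dvd_mul_right _ _)).1 h2
  rcases hπ.dvd_or_dvd h3 with h4 | h4
  · exact pderiv_not_dvd hi h4
  · exact hπ.not_isUnit (hred π (hg ▸ mul_dvd_mul_left π h4))

lemma AR_nonconst {f : S4} {d : ℕ} (hd : 1 ≤ d) (hf : f.IsHomogeneous d) (hred : Squarefree f) :
    ∃ i, pderiv i f ≠ 0 := by
  refine exists_pderiv_ne_s2 fun c hc => ?_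
  have h0 : f ≠ 0 := hred.ne_zero
  have h1 := hf.totalDegree h0
  rw [hc, totalDegree_C] at h1
  omega

lemma dvd_of_prop {f : S4} {d : ℕ} (hd : 1 ≤ d) (hf : f.IsHomogeneous d) (hred : Squarefree f)
    {M : S4} {j : Fin 4} (hj : pderiv j f ≠ 0) (h : ∀ i, pderiv j f ∣ M * pderiv i f) :
    pderiv j f ∣ M := by
  obtain ⟨u, m, c, hrel, hu, hm⟩ :=
    UniqueFactorizationMonoid.exists_reduced_factors _ hj M
  have hc : c ≠ 0 := by rintro rfl; simp at hu; exact hj hu.symm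
  have h1 : ∀ i, u ∣ pderiv i f := by
    intro i
    have := h i
    rw [← hu, ← hm, mul_assoc] at this
    have := (mul_dvd_mul_iff_left hc).1 this
    exact hrel.dvd_of_dvd_mul_left this
  have hun : IsUnit u := by
    by_contra hnu
    obtain ⟨p, hp, hpu⟩ := WfDvdMonoid.exists_irreducible_factor hnu
      (by rintro rfl; simp at hu; exact hj hu.symm)
    exact no_common_prime hd hf hred hp.prime fun i => hpu.trans (h1 i)
  rw [← hu, ← hm]
  exact mul_dvd_mul_left c hun.dvd

/-- linear independence of the minimal pair -/
lemma minimal_indep {f : S4} {d : ℕ} (hf : f.IsHomogeneous d) {ρ1 ρ2 : Fin 4 → S4} {e1 e2 : ℕ}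
    (hmin : MinimalPair f ρ1 ρ2 e1 e2) (a b : S4) (hab : a • ρ1 + b • ρ2 = 0) :
    a = 0 ∧ b = 0 := by
  obtain ⟨h1, h10, h1h, h1m, h2, h2h, -, h2n, -⟩ := hmin
  by_cases hb : b = 0
  · subst hb
    simp only [zero_smul, add_zero] at hab
    exact ⟨(smul_eq_zero.1 hab).resolve_right h10, rfl⟩
  exfalso
  obtain ⟨b', a', c, hrel, hb', ha'⟩ := UniqueFactorizationMonoid.exists_reduced_factors b hb a
  have hc : c ≠ 0 := by rintro rfl; simp at hb'; exact hb hb'.symm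
  have hb0 : b' ≠ 0 := by rintro rfl; simp at hb'; exact hb hb'.symm
  have hrel2 : ∀ i, a' * ρ1 i + b' * ρ2 i = 0 := by
    intro i
    have := congrFun hab i
    simp only [Pi.add_apply, Pi.smul_apply, smul_eq_mul, Pi.zero_apply] at this
    rw [← hb', ← ha'] at this
    have h3 : c * (a' * ρ1 i + b' * ρ2 i) = 0 := by linear_combination this
    exact (mul_eq_zero.1 h3).resolve_left hc
  have hdv : ∀ i, b' ∣ ρ1 i := by
    intro i
    refine hrel.dvd_of_dvd_mul_left (z := ρ1 i) ?_
    exact ⟨-ρ2 i, by linear_combination hrel2 i⟩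
  choose σ hσ using hdv
  have hρσ : ρ1 = b' • σ := funext hσ
  have hσAR : σ ∈ AR4 f := AR_div hb0 (hρσ ▸ h1)
  obtain ⟨i, hi⟩ : ∃ i, σ i ≠ 0 := by
    by_contra h0; push Not at h0
    exact h10 (by rw [hρσ]; funext i; simp [h0 i])
  have hdeg := totalDegree_mul_of_isDomain hb0 hi
  rw [← hσ i, (h1h i).totalDegree (by rw [hσ i]; exact mul_ne_zero hb0 hi)] at hdeg
  have hne : vcomp (σ i).totalDegree σ ≠ 0 := by
    intro h0
    have h0i : homogeneousComponent (σ i).totalDegree (σ i) = 0 := congrFun h0 i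
    obtain ⟨m, hm, hmd⟩ := Finset.exists_mem_eq_sup (σ i).support (by simpa using hi)
      (fun s : Fin 4 →₀ ℕ => s.sum fun _ e => e)
    have := congrArg (coeff m) h0i
    rw [coeff_homogeneousComponent, if_pos, coeff_zero] at this
    · exact (mem_support_iff.1 hm) this
    · exact hmd.symm
  have := h1m _ (vcomp_AR hf hσAR _) _ hne (vcomp_homog _ _)
  have hz : b'.totalDegree = 0 := by omega
  rw [totalDegree_eq_zero_iff_eq_C] at hz
  set β := coeff 0 b'
  have hβ : β ≠ 0 := by intro h0; rw [h0] at hz; simp at hz; exact hb0 hz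
  refine h2n (-(C β⁻¹ * a')) (funext fun i => ?_)
  have hβ1 : (C β⁻¹ * b' : S4) = 1 := by
    rw [hz, ← C_mul, inv_mul_cancel₀ hβ, C_1]
  simp only [Pi.smul_apply, smul_eq_mul]
  linear_combination C β⁻¹ * hrel2 i - ρ2 i * hβ1

/-- minor functional: determinant with first row `e_j` -/
def minorL (ρ1 ρ2 : Fin 4 → S4) (j : Fin 4) : (Fin 4 → S4) →ₗ[S4] S4 where
  toFun ρ := (Matrix.of ![Pi.single j 1, ρ1, ρ2, ρ]).det
  map_add' a b := by
    have := Matrix.det_updateRow_add (Matrix.of ![Pi.single j 1, ρ1, ρ2, (0 : Fin 4 → S4)]) 3 a b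
    have e : ∀ c : Fin 4 → S4, Matrix.updateRow (Matrix.of ![Pi.single j 1, ρ1, ρ2, 0]) 3 c
        = Matrix.of ![Pi.single j 1, ρ1, ρ2, c] := by
      intro c; ext i k; fin_cases i <;> simp [Matrix.updateRow_apply]
    simpa only [e] using this
  map_smul' r a := by
    have := Matrix.det_updateRow_smul (Matrix.of ![Pi.single j 1, ρ1, ρ2, (0 : Fin 4 → S4)]) 3 r a
    have e : ∀ c : Fin 4 → S4, Matrix.updateRow (Matrix.of ![Pi.single j 1, ρ1, ρ2, 0]) 3 c
        = Matrix.of ![Pi.single j 1, ρ1, ρ2, c] := by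
      intro c; ext i k; fin_cases i <;> simp [Matrix.updateRow_apply]
    simpa only [e, RingHom.id_apply, smul_eq_mul] using this

lemma minorL_def (ρ1 ρ2 : Fin 4 → S4) (j : Fin 4) (ρ : Fin 4 → S4) :
    minorL ρ1 ρ2 j ρ = (Matrix.of ![Pi.single j 1, ρ1, ρ2, ρ]).det := rfl

lemma minorL_minor (ρ1 ρ2 : Fin 4 → S4) (j : Fin 4) (ρ : Fin 4 → S4) :
    minorL ρ1 ρ2 j ρ = (-1) ^ (j : ℕ) *
      (Matrix.of fun i k => ![ρ1, ρ2, ρ] i (j.succAbove k) : Matrix (Fin 3) (Fin 3) S4).det := by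
  rw [minorL_def, Matrix.det_succ_row_zero, Finset.sum_eq_single j]
  · simp only [Matrix.of_apply, Matrix.cons_val_zero, Pi.single_eq_same, mul_one]
    congr 1
  · intro b _ hb
    simp [hb]
  · simp

lemma minorL_prop {f : S4} {ρ1 ρ2 ρ : Fin 4 → S4} (h1 : ρ1 ∈ AR4 f) (h2 : ρ2 ∈ AR4 f)
    (h : ρ ∈ AR4 f) (i j : Fin 4) :
    minorL ρ1 ρ2 i ρ * pderiv j f = minorL ρ1 ρ2 j ρ * pderiv i f := by
  have h1' : ∑ i, ρ1 i * pderiv i f = 0 := h1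
  have h2' : ∑ i, ρ2 i * pderiv i f = 0 := h2
  have h3' : ∑ i, ρ i * pderiv i f = 0 := h
  set A : Matrix (Fin 4) (Fin 4) S4 := Matrix.of ![Pi.single i 1, ρ1, ρ2, ρ] with hA
  set F : Fin 4 → S4 := fun k => pderiv k f with hF
  have hAF : A *ᵥ F = Pi.single (0 : Fin 4) (pderiv i f) := by
    funext k
    fin_cases k
    · simp [hA, hF, Matrix.mulVec, dotProduct, Pi.single_apply]
    · simpa [hA, hF, Matrix.mulVec, dotProduct] using h1'
    · simpa [hA, hF, Matrix.mulVec, dotProduct] using h2'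
    · simpa [hA, hF, Matrix.mulVec, dotProduct] using h3'
  have h4 : (A.adjugate * A).mulVec F = A.adjugate.mulVec (Pi.single (0 : Fin 4) (pderiv i f)) := by
    rw [← Matrix.mulVec_mulVec, hAF]
  rw [Matrix.adjugate_mul, Matrix.smul_mulVec, Matrix.one_mulVec] at h4
  have h5 := congrFun h4 j
  rw [Matrix.mulVec_single] at h5
  simp only [Pi.smul_apply, smul_eq_mul, MulOpposite.smul_eq_mul_unop, MulOpposite.unop_op,
    Matrix.col_apply, Matrix.adjugate_apply] at h5
  have e : A.updateRow 0 (Pi.single j 1) = Matrix.of ![Pi.single j 1, ρ1, ρ2, ρ] := by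
    ext a k; fin_cases a <;> simp [Matrix.updateRow_apply, hA]
  rw [e] at h5
  exact h5

lemma det4_homog {A : Matrix (Fin 4) (Fin 4) S4} {e : Fin 4 → ℕ}
    (h : ∀ i j, (A i j).IsHomogeneous (e i)) : A.det.IsHomogeneous (∑ i, e i) := by
  rw [Matrix.det_apply']
  refine IsHomogeneous.sum _ _ _ fun τ _ => ?_
  have hp : (∏ i, A (τ i) i).IsHomogeneous (∑ i, e (τ i)) :=
    IsHomogeneous.prod _ _ _ fun i _ => h _ _
  rw [Equiv.sum_comp τ e] at hp
  have := hp.C_mul ((Equiv.Perm.sign τ : ℤ) : ℂ)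
  simpa using this

lemma minorL_homog {ρ1 ρ2 : Fin 4 → S4} {e1 e2 : ℕ} (h1 : VecHomog ρ1 e1) (h2 : VecHomog ρ2 e2)
    (j i : Fin 4) : (minorL ρ1 ρ2 j (Pi.single i 1)).IsHomogeneous (e1 + e2) := by
  have hs : ∀ i k : Fin 4, ((Pi.single i 1 : Fin 4 → S4) k).IsHomogeneous 0 := by
    intro i k
    by_cases hik : k = i
    · subst hik; simpa using isHomogeneous_one _ _
    · simpa [hik] using isHomogeneous_zero _ _ _
  have := det4_homog (A := Matrix.of ![Pi.single j 1, ρ1, ρ2, Pi.single i 1])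
    (e := ![0, e1, e2, 0]) (by
      intro a b
      fin_cases a
      · exact hs j b
      · exact h1 b
      · exact h2 b
      · exact hs i b)
  rw [minorL_def]
  simpa [Fin.sum_univ_four] using this

/-- The data extracted from tameness. -/
structure LData (f : S4) (ρ1 ρ2 : Fin 4 → S4) (d m e1 e2 e3 : ℕ)
    (L : (Fin 4 → S4) →ₗ[S4] S4) (F : S4) : Prop where
  hf : f.IsHomogeneous d
  hm : m + 1 = d
  he : e1 + e2 + e3 = m
  r1 : ρ1 ∈ AR4 f
  r2 : ρ2 ∈ AR4 f
  h1 : VecHomog ρ1 e1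
  h2 : VecHomog ρ2 e2
  ind : ∀ a b : S4, a • ρ1 + b • ρ2 = 0 → a = 0 ∧ b = 0
  F0 : F ≠ 0
  Fh : F.IsHomogeneous m
  Lh : ∀ i, (L (Pi.single i 1)).IsHomogeneous (e1 + e2)
  Ldvd : ∀ ρ ∈ AR4 f, F ∣ L ρ
  L1 : L ρ1 = 0
  L2 : L ρ2 = 0
  Lker : ∀ ρ ∈ AR4 f, L ρ = 0 → ∃ a b : S4, ρ = a • ρ1 + b • ρ2

lemma exists_LData (f : S4) (d e1 e2 e3 : ℕ) (ρ1 ρ2 : Fin 4 → S4)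
    (hd : 1 ≤ d) (hf : f.IsHomogeneous d) (hred : Squarefree f)
    (hmin : MinimalPair f ρ1 ρ2 e1 e2) (htame : TamePair f ρ1 ρ2)
    (he3 : e1 + e2 + e3 + 1 = d) :
    ∃ L F, LData f ρ1 ρ2 d (d - 1) e1 e2 e3 L F := by
  obtain ⟨j, hj⟩ := AR_nonconst hd hf hred
  have hind := minimal_indep hf hmin
  obtain ⟨h1, h10, h1h, h1m, h2, h2h, -, h2n, -⟩ := hmin
  have hLh := minorL_homog h1h h2h j
  refine ⟨minorL ρ1 ρ2 j, pderiv j f, hf, by omega, by omega, h1, h2, h1h, h2h, hind, hj, hf.pderiv,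
    hLh, ?_, ?_, ?_, ?_⟩
  · intro ρ hρ
    refine dvd_of_prop hd hf hred hj fun i => ?_
    rw [← minorL_prop h1 h2 hρ i j]
    exact dvd_mul_left _ _
  · rw [minorL_def]
    exact Matrix.det_zero_of_row_eq (i := 1) (j := 3) (by decide) rfl
  · rw [minorL_def]
    exact Matrix.det_zero_of_row_eq (i := 2) (j := 3) (by decide) rfl
  · intro ρ hρ h0
    have key : ∀ k, vcomp k ρ ∈ Submodule.span S4 {ρ1, ρ2} := by
      intro k
      have hk := vcomp_AR hf hρ k
      have hL0 : minorL ρ1 ρ2 j (vcomp k ρ) = 0 := by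
        rw [L_vcomp hLh, h0, map_zero]
      obtain ⟨a, b, hab⟩ := htame _ hk k (vcomp_homog k ρ) (by
        intro i
        have h3 := minorL_prop h1 h2 hk i j
        rw [hL0, zero_mul] at h3
        have h4 := (mul_eq_zero.1 h3).resolve_right hj
        rw [minorL_minor] at h4
        refine (mul_eq_zero.1 h4).resolve_left ?_
        exact pow_ne_zero _ (neg_ne_zero.2 one_ne_zero))
      rw [Submodule.mem_span_pair]
      exact ⟨a, b, hab.symm⟩
    obtain ⟨N, hN⟩ := vcomp_sum ρ
    have : ρ ∈ Submodule.span S4 {ρ1, ρ2} := by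
      rw [hN]; exact Submodule.sum_mem _ fun k _ => key k
    rw [Submodule.mem_span_pair] at this
    obtain ⟨a, b, hab⟩ := this
    exact ⟨a, b, hab.symm⟩

/-- The ideal `I` of quotients `L ρ / F`. -/
def quotI (f : S4) (L : (Fin 4 → S4) →ₗ[S4] S4) (F : S4) : Ideal S4 :=
  ((AR4 f).map L).comap (LinearMap.lsmul S4 S4 F)

lemma mem_quotI {f : S4} {L : (Fin 4 → S4) →ₗ[S4] S4} {F p : S4} :
    p ∈ quotI f L F ↔ ∃ ρ ∈ AR4 f, L ρ = F * p := by
  simp [quotI, Submodule.mem_map]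

/-- Koszul argument. -/
lemma koszul {f : S4} {ρ1 ρ2 : Fin 4 → S4} {d m e1 e2 e3 : ℕ}
    {L : (Fin 4 → S4) →ₗ[S4] S4} {F : S4} (D : LData f ρ1 ρ2 d m e1 e2 e3 L F)
    {u v w g : S4} (hu : u ≠ 0) (huv : ∀ x, u ∣ v * x → u ∣ x)
    (hw : ∀ x, w * x ∈ Ideal.span {u, v} → x ∈ Ideal.span {u, v})
    (hug : u * g ∈ quotI f L F) (hvg : v * g ∈ quotI f L F) (hwg : w * g ∈ quotI f L F) :
    g ∈ quotI f L F := by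
  rw [mem_quotI] at hug hvg hwg ⊢
  obtain ⟨α, hα, hLα⟩ := hug
  obtain ⟨β, hβ, hLβ⟩ := hvg
  obtain ⟨γ, hγ, hLγ⟩ := hwg
  have getker : ∀ (x y : S4) (σ τ : Fin 4 → S4), σ ∈ AR4 f → τ ∈ AR4 f →
      x * L σ = y * L τ → ∃ a b : S4, x • σ - y • τ = a • ρ1 + b • ρ2 := by
    intro x y σ τ hσ hτ h
    refine D.Lker _ (Submodule.sub_mem _ (Submodule.smul_mem _ _ hσ) (Submodule.smul_mem _ _ hτ)) ?_
    rw [map_sub, map_smul, map_smul, smul_eq_mul, smul_eq_mul, h, sub_self]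
  obtain ⟨p1, p2, hp⟩ := getker v u α β hα hβ (by rw [hLα, hLβ]; ring)
  obtain ⟨q1, q2, hq⟩ := getker w u α γ hα hγ (by rw [hLα, hLγ]; ring)
  obtain ⟨r1, r2, hr⟩ := getker w v β γ hβ hγ (by rw [hLβ, hLγ]; ring)
  obtain ⟨k1, k2⟩ := D.ind (w * p1 - v * q1 + u * r1) (w * p2 - v * q2 + u * r2) (by
    funext i
    have a1 := congrFun hp i
    have a2 := congrFun hq i
    have a3 := congrFun hr i
    simp only [Pi.add_apply, Pi.sub_apply, Pi.smul_apply, smul_eq_mul, Pi.zero_apply] at a1 a2 a3 ⊢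
    linear_combination -w * a1 + v * a2 - u * a3)
  have m1 : p1 ∈ Ideal.span {u, v} := hw _ (Ideal.mem_span_pair.2 ⟨-r1, q1, by linear_combination -k1⟩)
  have m2 : p2 ∈ Ideal.span {u, v} := hw _ (Ideal.mem_span_pair.2 ⟨-r2, q2, by linear_combination -k2⟩)
  obtain ⟨s1, t1, hs1⟩ := Ideal.mem_span_pair.1 m1
  obtain ⟨s2, t2, hs2⟩ := Ideal.mem_span_pair.1 m2
  have hdv : ∀ i, u ∣ α i - t1 * ρ1 i - t2 * ρ2 i := by
    intro i
    refine huv _ ⟨β i + s1 * ρ1 i + s2 * ρ2 i, ?_⟩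
    have a1 := congrFun hp i
    simp only [Pi.add_apply, Pi.sub_apply, Pi.smul_apply, smul_eq_mul] at a1
    linear_combination a1 - ρ1 i * hs1 - ρ2 i * hs2
  choose σ hσ using hdv
  have hσ' : u • σ = α - t1 • ρ1 - t2 • ρ2 := funext fun i => by simp [hσ i]
  refine ⟨σ, AR_div hu ?_, ?_⟩
  · rw [hσ']
    exact Submodule.sub_mem _ (Submodule.sub_mem _ hα (Submodule.smul_mem _ _ D.r1))
      (Submodule.smul_mem _ _ D.r2)
  · have := congrArg L hσ'
    rw [map_smul, map_sub, map_sub, map_smul, map_smul, D.L1, D.L2, hLα] at this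
    simp only [smul_eq_mul, mul_zero, sub_zero] at this
    exact mul_left_cancel₀ hu (by linear_combination this)

lemma sub_subst_mem {J : Ideal S4} (θ : S4 →ₐ[ℂ] S4) (h : ∀ i, X i - θ (X i) ∈ J) (p : S4) :
    p - θ p ∈ J := by
  have : (Ideal.Quotient.mkₐ ℂ J) = (Ideal.Quotient.mkₐ ℂ J).comp θ := by
    ext i
    simpa using (Ideal.Quotient.eq).2 (h i)
  have h2 := DFunLike.congr_fun this p
  exact (Ideal.Quotient.eq).1 h2

/-- three linear forms -/
lemma linear_regular {f : S4} {ρ1 ρ2 : Fin 4 → S4} {d m e1 e2 e3 : ℕ}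
    {L : (Fin 4 → S4) →ₗ[S4] S4} {F : S4} (D : LData f ρ1 ρ2 d m e1 e2 e3 L F)
    {i j p q : Fin 4} (hij : i ≠ j) (hip : i ≠ p) (hiq : i ≠ q) (hjp : j ≠ p) (hjq : j ≠ q)
    (hpq : p ≠ q) (a c α β : ℂ) (hab : α ≠ 0 ∨ β ≠ 0) {g : S4}
    (h1 : (X j + C a * X i) * g ∈ quotI f L F)
    (h2 : (X q + C c * X p) * g ∈ quotI f L F)
    (h3 : (C α * X i + C β * X p) * g ∈ quotI f L F) : g ∈ quotI f L F := by
  have hn : (C α * X i + C β * X p : S4) ≠ 0 := by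
    intro h0
    rcases hab with h | h
    · have := congrArg (MvPolynomial.eval (Pi.single i (1 : ℂ))) h0
      simp [hip.symm] at this
      exact h this
    · have := congrArg (MvPolynomial.eval (Pi.single p (1 : ℂ))) h0
      simp [hip] at this
      exact h this
  refine koszul D (u := X j + C a * X i) (v := X q + C c * X p) (w := C α * X i + C β * X p)
    ?_ ?_ ?_ h1 h2 h3
  · intro h0
    have := congrArg (MvPolynomial.eval (Pi.single j (1 : ℂ))) h0
    simp [hij] at this
  · intro x hx
    let θ : S4 →ₐ[ℂ] S4 := aeval fun k => if k = j then - (C a * X i) else X k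
    have hθ : ∀ k, θ (X k) = if k = j then - (C a * X i) else X k := fun k => by simp [θ]
    have hmem := sub_subst_mem (J := Ideal.span {(X j + C a * X i : S4)}) θ (by
      intro k; rw [hθ]
      split_ifs with h
      · subst h; rw [sub_neg_eq_add]; exact Ideal.mem_span_singleton_self _
      · simp) x
    obtain ⟨y, hy⟩ := hx
    have h4 := congrArg θ hy
    have hC : ∀ r : ℂ, θ (C r) = C r := fun r => by simp [θ]
    simp only [map_mul, map_add, hθ, hC, if_true, if_neg hij, if_neg hjq.symm, if_neg hjp.symm,
      neg_add_cancel, zero_mul] at h4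
    have h5 : θ x = 0 := by
      refine (mul_eq_zero.1 h4).resolve_left fun h0 => ?_
      have := congrArg (MvPolynomial.eval (Pi.single q (1 : ℂ))) h0
      simp [hpq] at this
    rw [h5, sub_zero] at hmem
    exact Ideal.mem_span_singleton.1 hmem
  · intro x hx
    let θ : S4 →ₐ[ℂ] S4 := aeval fun k => if k = j then - (C a * X i) else
      if k = q then - (C c * X p) else X k
    have hθ : ∀ k, θ (X k) = if k = j then - (C a * X i) else
      if k = q then - (C c * X p) else X k := fun k => by simp [θ]
    have hmem := sub_subst_mem (J := Ideal.span {(X j + C a * X i : S4), X q + C c * X p}) θ (by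
      intro k; rw [hθ]
      split_ifs with h h'
      · subst h; rw [sub_neg_eq_add]; exact Ideal.subset_span (by simp)
      · subst h'; rw [sub_neg_eq_add]; exact Ideal.subset_span (by simp)
      · simp) x
    obtain ⟨y, z, hy⟩ := Ideal.mem_span_pair.1 hx
    have h4 := congrArg θ hy
    have hC : ∀ r : ℂ, θ (C r) = C r := fun r => by simp [θ]
    simp only [map_mul, map_add, hθ, hC, if_true, if_neg hij, if_neg hjq.symm, if_neg hjp.symm,
      if_neg hpq, if_neg hiq, neg_add_cancel, mul_zero, add_zero] at h4
    have h5 : θ x = 0 := (mul_eq_zero.1 h4.symm).resolve_left hn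
    rw [h5, sub_zero] at hmem
    exact hmem

/-- `I` contains a nonzero binary form in each pair of variables. -/
def PropB (I : Ideal S4) : Prop :=
  ∀ i j : Fin 4, i ≠ j → ∃ (k : ℕ) (P : Polynomial ℂ), P ≠ 0 ∧ P.natDegree ≤ k ∧
    rename ![i, j] (P.homogenize k) ∈ I

lemma factor_step (I : Ideal S4) (hI : (1 : S4) ∉ I) (i j : Fin 4) :
    ∀ (k : ℕ) (P : Polynomial ℂ), P ≠ 0 → P.natDegree ≤ k →
      rename ![i, j] (P.homogenize k) ∈ I →
      ∃ g ∉ I, ∃ a b : ℂ, (a ≠ 0 ∨ b ≠ 0) ∧ (C a * X i + C b * X j) * g ∈ I := by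
  intro k
  induction k with
  | zero =>
    intro P hP hdeg hmem
    exfalso
    rw [Polynomial.eq_C_of_natDegree_le_zero hdeg] at hmem hP
    have hc : P.coeff 0 ≠ 0 := by simpa using hP
    rw [Polynomial.homogenize_C, pow_zero, mul_one, rename_C] at hmem
    apply hI
    have := I.mul_mem_left (C (P.coeff 0)⁻¹) hmem
    rwa [← C_mul, inv_mul_cancel₀ hc, C_1] at this
  | succ k ih =>
    intro P hP hdeg hmem
    by_cases hlt : P.natDegree ≤ k
    · have e : P.homogenize (k + 1) = X 1 * P.homogenize k := by
        have := Polynomial.homogenize_mul (1 : Polynomial ℂ) P (m := 1) (n := k) (by simp) hlt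
        rw [one_mul, Polynomial.homogenize_one, pow_one, add_comm 1 k] at this
        exact this
      rw [e, map_mul, rename_X] at hmem
      by_cases hk : rename ![i, j] (P.homogenize k) ∈ I
      · exact ih P hP hlt hk
      · exact ⟨_, hk, 0, 1, Or.inr one_ne_zero, by simpa using hmem⟩
    · have hpos : 0 < P.natDegree := by omega
      obtain ⟨r, hr⟩ := IsAlgClosed.exists_root P
        (Polynomial.natDegree_pos_iff_degree_pos.1 hpos).ne'
      obtain ⟨Q, hQ⟩ := Polynomial.dvd_iff_isRoot.2 hr
      have hQ0 : Q ≠ 0 := by rintro rfl; simp at hQ; exact hP hQ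
      have hQd : Q.natDegree ≤ k := by
        have := Polynomial.natDegree_mul (Polynomial.X_sub_C_ne_zero r) hQ0
        rw [← hQ, Polynomial.natDegree_X_sub_C] at this
        omega
      have e : P.homogenize (k + 1) = (X 0 - C r * X 1) * Q.homogenize k := by
        have := Polynomial.homogenize_mul (Polynomial.X - Polynomial.C r) Q (m := 1) (n := k)
          (by simp) hQd
        rw [← hQ, add_comm 1 k, Polynomial.homogenize_sub, Polynomial.homogenize_X one_ne_zero,
          Polynomial.homogenize_C] at this
        simpa using this
      rw [e, map_mul] at hmem
      by_cases hk : rename ![i, j] (Q.homogenize k) ∈ I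
      · exact ih Q hQ0 hQd hk
      · refine ⟨_, hk, 1, -r, Or.inl one_ne_zero, ?_⟩
        simpa [sub_eq_add_neg] using hmem

/-- the colon ideal `(I : g)` -/
def colonI (I : Ideal S4) (g : S4) : Ideal S4 := Submodule.comap (LinearMap.lsmul S4 S4 g) I

lemma mem_colonI {I : Ideal S4} {g p : S4} : p ∈ colonI I g ↔ g * p ∈ I := Iff.rfl

lemma PropB_colon {I : Ideal S4} (h : PropB I) (g : S4) : PropB (colonI I g) := by
  intro i j hij
  obtain ⟨k, P, h1, h2, h3⟩ := h i j hij
  exact ⟨k, P, h1, h2, I.mul_mem_left g h3⟩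

lemma factor_norm {I : Ideal S4} (hI : (1 : S4) ∉ I) (hB : PropB I) {i j : Fin 4} (hij : i ≠ j) :
    ∃ g ∉ I, ∃ i' j' : Fin 4, ((i' = i ∧ j' = j) ∨ (i' = j ∧ j' = i)) ∧
      ∃ a : ℂ, (X j' + C a * X i') * g ∈ I := by
  obtain ⟨k, P, h1, h2, h3⟩ := hB i j hij
  obtain ⟨g, hg, a, b, hab, hm⟩ := factor_step I hI i j k P h1 h2 h3
  refine ⟨g, hg, ?_⟩
  by_cases hb : b = 0
  · subst hb
    have ha : a ≠ 0 := by simpa using hab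
    refine ⟨j, i, Or.inr ⟨rfl, rfl⟩, 0, ?_⟩
    have := I.mul_mem_left (C a⁻¹) hm
    have e : C a⁻¹ * ((C a * X i + C 0 * X j) * g) = (X i + C 0 * X j) * g := by
      have : (C a⁻¹ * C a : S4) = 1 := by rw [← C_mul, inv_mul_cancel₀ ha, C_1]
      simp only [C_0]
      linear_combination X i * g * this
    rwa [e] at this
  · refine ⟨i, j, Or.inl ⟨rfl, rfl⟩, b⁻¹ * a, ?_⟩
    have := I.mul_mem_left (C b⁻¹) hm
    have e : C b⁻¹ * ((C a * X i + C b * X j) * g) = (X j + C (b⁻¹ * a) * X i) * g := by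
      have : (C b⁻¹ * C b : S4) = 1 := by rw [← C_mul, inv_mul_cancel₀ hb, C_1]
      rw [C_mul]
      linear_combination X j * g * this
    rwa [e] at this

lemma one_mem_of_PropB {f : S4} {ρ1 ρ2 : Fin 4 → S4} {d m e1 e2 e3 : ℕ}
    {L : (Fin 4 → S4) →ₗ[S4] S4} {F : S4} (D : LData f ρ1 ρ2 d m e1 e2 e3 L F)
    (hB : PropB (quotI f L F)) : (1 : S4) ∈ quotI f L F := by
  by_contra hI
  set I := quotI f L F with hIdef
  obtain ⟨g1, hg1, i, j, hij, a, ha⟩ := factor_norm hI hB (i := 0) (j := 1) (by decide)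
  have hI1 : (1 : S4) ∉ colonI I g1 := by rw [mem_colonI, mul_one]; exact hg1
  obtain ⟨g2, hg2, p, q, hpq, c, hc⟩ :=
    factor_norm hI1 (PropB_colon hB g1) (i := 2) (j := 3) (by decide)
  have hI2 : (1 : S4) ∉ colonI (colonI I g1) g2 := by rw [mem_colonI, mul_one]; exact hg2
  have hip : i ≠ p := by
    rcases hij with ⟨rfl, rfl⟩ | ⟨rfl, rfl⟩ <;> rcases hpq with ⟨rfl, rfl⟩ | ⟨rfl, rfl⟩ <;> decide
  obtain ⟨k, P, h1, h2, h3⟩ := PropB_colon (PropB_colon hB g1) g2 i p hip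
  obtain ⟨g3, hg3, α, β, hab, hm⟩ := factor_step _ hI2 i p k P h1 h2 h3
  apply hg3
  rw [mem_colonI, mem_colonI] at hm ⊢
  rw [mem_colonI] at hc
  refine linear_regular D (i := i) (j := j) (p := p) (q := q) ?_ hip ?_ ?_ ?_ ?_ a c α β hab
    ?_ ?_ ?_
  all_goals first
    | (rcases hij with ⟨rfl, rfl⟩ | ⟨rfl, rfl⟩ <;> rcases hpq with ⟨rfl, rfl⟩ | ⟨rfl, rfl⟩ <;>
        decide)
    | skip
  · have := I.mul_mem_left (g2 * g3) ha
    convert this using 1; ring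
  · have := I.mul_mem_left g3 hc
    convert this using 1; ring
  · convert hm using 1; ring

/-- Freeness from `1 ∈ I`. -/
lemma free_of_one {f : S4} {ρ1 ρ2 : Fin 4 → S4} {d m e1 e2 e3 : ℕ}
    {L : (Fin 4 → S4) →ₗ[S4] S4} {F : S4} (D : LData f ρ1 ρ2 d m e1 e2 e3 L F)
    (h12 : e1 ≤ e2) (h23 : e2 ≤ e3)
    (h : (1 : S4) ∈ quotI f L F) : IsFreeWith f e1 e2 e3 := by
  obtain ⟨σ, hσ, hL⟩ := mem_quotI.1 h
  rw [mul_one] at hL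
  have hL' : L (vcomp e3 σ) = F := by
    rw [L_vcomp D.Lh, hL]
    have : e3 + (e1 + e2) = m := by have := D.he; omega
    rw [this]
    exact homogeneousComponent_eq_self ((mem_homogeneousSubmodule _ _).2 D.Fh)
  have hσ' := vcomp_AR D.hf hσ e3
  refine ⟨h12, h23, ρ1, ρ2, vcomp e3 σ, D.r1, D.r2, hσ', D.h1, D.h2, vcomp_homog _ _, ?_, ?_⟩
  · intro ρ hρ
    obtain ⟨c, hc⟩ := D.Ldvd ρ hρ
    obtain ⟨a, b, hab⟩ := D.Lker (ρ - c • vcomp e3 σ)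
      (Submodule.sub_mem _ hρ (Submodule.smul_mem _ _ hσ')) (by
        rw [map_sub, map_smul, hL', hc, smul_eq_mul]; ring)
    exact ⟨a, b, c, by rw [← hab]; abel⟩
  · intro a b c h0
    have h1 := congrArg L h0
    rw [map_add, map_add, map_smul, map_smul, map_smul, D.L1, D.L2, hL', map_zero] at h1
    simp only [smul_eq_mul, mul_zero, zero_add] at h1
    have hc : c = 0 := (mul_eq_zero.1 h1).resolve_right D.F0
    subst hc
    rw [zero_smul, add_zero] at h0
    obtain ⟨ha, hb⟩ := D.ind a b h0
    exact ⟨ha, hb, rfl⟩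

/-! ### dimensions -/

lemma finrank_map_inf {V W : Type*} [AddCommGroup V] [Module ℂ V] [AddCommGroup W] [Module ℂ W]
    (g : V →ₗ[ℂ] W) (U : Submodule ℂ V) [FiniteDimensional ℂ U] :
    Module.finrank ℂ (U.map g) + Module.finrank ℂ (U ⊓ LinearMap.ker g : Submodule ℂ V)
      = Module.finrank ℂ U := by
  have h := LinearMap.finrank_range_add_finrank_ker (g.domRestrict U)
  rw [LinearMap.range_domRestrict] at h
  rw [← h]
  congr 1
  have : (U ⊓ LinearMap.ker g : Submodule ℂ V) = (LinearMap.ker (g.domRestrict U)).map U.subtype := by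
    ext x; simp [Submodule.mem_map, and_comm]
  rw [this]
  exact (Submodule.equivMapOfInjective _ U.injective_subtype _).finrank_eq.symm

lemma finrank_map_inj {V W : Type*} [AddCommGroup V] [Module ℂ V] [AddCommGroup W] [Module ℂ W]
    (g : V →ₗ[ℂ] W) (U : Submodule ℂ V) (hg : Function.Injective g) :
    Module.finrank ℂ (U.map g) = Module.finrank ℂ U :=
  (Submodule.equivMapOfInjective g hg U).finrank_eq.symm

abbrev Sk (k : ℕ) : Submodule ℂ S4 := homogeneousSubmodule (Fin 4) ℂ k

instance Sk_fin (k : ℕ) : FiniteDimensional ℂ (Sk k) :=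
  Module.Finite.iff_fg.2 (homogeneousSubmodule_fg (Fin 4) ℂ k)

lemma finrank_Sk (k : ℕ) : Module.finrank ℂ (Sk k) = (k + 3).choose 3 := by
  have hs : {d : Fin 4 →₀ ℕ | d.degree = k} =
      ((Finset.univ : Finset (Fin 4)).finsuppAntidiag k : Set (Fin 4 →₀ ℕ)) := by
    ext d
    simp [Finset.mem_finsuppAntidiag, Finsupp.degree_eq_sum]
  rw [show Sk k = _ from homogeneousSubmodule_eq_finsupp_supported (Fin 4) ℂ k, hs,
    (AddMonoidAlgebra.supportedEquivFinsupp _).finrank_eq, Module.finrank_finsupp_self]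
  simp only [SetLike.coe_sort_coe, Fintype.card_coe]
  rw [Finset.card_finsuppAntidiag_nat_eq_choose]
  simp only [Finset.card_univ, Fintype.card_fin]
  rw [show 4 + k - 1 = k + 3 by omega]
  exact Nat.choose_symm_of_eq_add rfl

lemma Sk6 (k : ℕ) : (6 : ℤ) * (Module.finrank ℂ (Sk k) : ℤ) = (k + 1) * (k + 2) * (k + 3) := by
  rw [finrank_Sk]
  induction k with
  | zero => rfl
  | succ k ih =>
    have h1 : (k + 1 + 3).choose 3 = (k + 3).choose 2 + (k + 3).choose 3 := Nat.choose_succ_succ _ _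
    have h2 : (k + 3).choose 2 * 2 = (k + 3) * (k + 2) := by
      have := Nat.triangle_succ (k + 2)
      rw [Nat.choose_two_right, Nat.div_mul_cancel]
      · rfl
      · exact (Nat.even_mul_pred_self (k + 3)).two_dvd
    have h2' : ((k + 3).choose 2 : ℤ) * 2 = (k + 3) * (k + 2) := by exact_mod_cast h2
    rw [h1]; push_cast
    linear_combination 3 * h2' + ih

/-- Vectors of degree `k`. -/
abbrev Vk (k : ℕ) : Submodule ℂ (Fin 4 → S4) :=
  Submodule.pi Set.univ (fun _ => homogeneousSubmodule (Fin 4) ℂ k)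

lemma mem_Vk {k : ℕ} {ρ : Fin 4 → S4} : ρ ∈ Vk k ↔ VecHomog ρ k := by
  simp [Submodule.mem_pi, VecHomog]

/-- combination map -/
def combMap {n : ℕ} (r : Fin n → Fin 4 → S4) (e : Fin n → ℕ) (k : ℕ) :
    ((i : Fin n) → Sk (k - e i)) →ₗ[ℂ] (Fin 4 → S4) where
  toFun a := ∑ i, (a i : S4) • r i
  map_add' a b := by simp [add_smul, Finset.sum_add_distrib]
  map_smul' c a := by simp [Finset.smul_sum]

lemma finrank_comb {n : ℕ} (r : Fin n → Fin 4 → S4) (e : Fin n → ℕ) (k : ℕ)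
    (hk : ∀ i, e i ≤ k) (hr : ∀ i, VecHomog (r i) (e i))
    (hind : ∀ a : Fin n → S4, ∑ i, a i • r i = 0 → ∀ i, a i = 0)
    (U : Submodule ℂ (Fin 4 → S4))
    (hU : ∀ ρ, ρ ∈ U ↔ VecHomog ρ k ∧ ∃ a : Fin n → S4, ρ = ∑ i, a i • r i) :
    Module.finrank ℂ U = ∑ i, Module.finrank ℂ (Sk (k - e i)) := by
  have hinj : Function.Injective (combMap r e k) := by
    rw [injective_iff_map_eq_zero]
    intro a ha
    funext i
    exact Subtype.ext (hind (fun i => (a i : S4)) ha i)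
  have hrange : LinearMap.range (combMap r e k) = U := by
    ext ρ
    rw [hU]
    constructor
    · rintro ⟨a, rfl⟩
      refine ⟨fun j => ?_, fun i => a i, rfl⟩
      change (∑ i, (a i : S4) • r i) j |>.IsHomogeneous k
      rw [Finset.sum_apply]
      refine IsHomogeneous.sum _ _ _ fun i _ => ?_
      have h1 := ((mem_homogeneousSubmodule _ _).1 (a i).2).mul (hr i j)
      rw [Nat.sub_add_cancel (hk i)] at h1
      exact h1
    · rintro ⟨hh, a, ha⟩
      refine ⟨fun i => ⟨homogeneousComponent (k - e i) (a i), homogeneousComponent_mem _ _⟩, ?_⟩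
      rw [← vcomp_self hh, ha]
      change ∑ i, homogeneousComponent (k - e i) (a i) • r i = _
      funext j
      simp only [vcomp, Finset.sum_apply, map_sum]
      refine Finset.sum_congr rfl fun i _ => ?_
      have := hc_mul (e i) (hr i j) (k - e i) (a i)
      rw [Nat.sub_add_cancel (hk i)] at this
      exact this.symm
  rw [← hrange, LinearMap.finrank_range_of_inj hinj, Module.finrank_pi_fintype]

lemma finrank_Vk (k : ℕ) : Module.finrank ℂ (Vk k) = 4 * Module.finrank ℂ (Sk k) := by
  have := finrank_comb (n := 4) (fun i => Pi.single i 1) (fun _ => 0) k (by simp)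
    (by
      intro i j
      by_cases h : j = i
      · subst h; simpa using isHomogeneous_one _ _
      · simpa [h] using isHomogeneous_zero _ _ _)
    (by
      intro a ha i
      have := congrFun ha i
      simpa [Finset.sum_apply, Pi.single_apply] using this)
    (Vk k) (by
      intro ρ
      rw [mem_Vk]
      refine ⟨fun h => ⟨h, ρ, ?_⟩, fun h => h.1⟩
      funext i
      simp [Finset.sum_apply, Pi.single_apply])
  rw [this]; simp

instance Vk_fin (k : ℕ) : FiniteDimensional ℂ (Vk k) := by
  have hS : (homogeneousSubmodule (Fin 4) ℂ k).FG := homogeneousSubmodule_fg (Fin 4) ℂ k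
  have h : (Submodule.pi Set.univ
      (fun _ : Fin 4 => homogeneousSubmodule (Fin 4) ℂ k)).FG :=
    Submodule.fg_pi fun _ => hS
  have e : Vk k = Submodule.pi Set.univ
      (fun _ : Fin 4 => homogeneousSubmodule (Fin 4) ℂ k) := by
    first
    | rfl
    | (ext ρ; simp [Vk, Submodule.mem_pi])
  rw [e]
  exact Module.Finite.iff_fg.2 h

instance ARgr_fin (f : S4) (k : ℕ) : FiniteDimensional ℂ (ARgr f k) :=
  Submodule.finiteDimensional_of_le (inf_le_right : ARgr f k ≤ Vk k)

lemma mem_ARgr {f : S4} {k : ℕ} {ρ : Fin 4 → S4} :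
    ρ ∈ ARgr f k ↔ ρ ∈ AR4 f ∧ VecHomog ρ k := by
  rw [ARgr, Submodule.mem_inf, ← mem_Vk]; rfl

lemma mem_Jac {f p : S4} : p ∈ JacIdeal f ↔ ∃ ρ, jacPair f ρ = p := by
  rw [JacIdeal, Ideal.mem_span_range_iff_exists_fun]; rfl

lemma milnor_eq {f : S4} {d m : ℕ} (hf : f.IsHomogeneous d) (hm : m + 1 = d) (k : ℕ) :
    milnor4 f (k + m) + 4 * Module.finrank ℂ (Sk k)
      = Module.finrank ℂ (Sk (k + m)) + arDim f k := by
  have hh : ∀ i, (jacPair f (Pi.single i 1)).IsHomogeneous m := fun i => by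
    rw [jac_single]; have := hf.pderiv (i := i); rwa [show d - 1 = m by omega] at this
  have h1 := finrank_map_inf ((jacPair f).restrictScalars ℂ) (Vk k)
  have h2 := finrank_map_inf (Submodule.mkQ ((JacIdeal f).restrictScalars ℂ)) (Sk (k + m))
  have e1 : (Vk k ⊓ LinearMap.ker ((jacPair f).restrictScalars ℂ) : Submodule ℂ _) = ARgr f k := by
    rw [ARgr, inf_comm]; rfl
  have e2 : (Sk (k + m) ⊓ LinearMap.ker (Submodule.mkQ ((JacIdeal f).restrictScalars ℂ))
      : Submodule ℂ S4) = (Vk k).map ((jacPair f).restrictScalars ℂ) := by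
    rw [Submodule.ker_mkQ]
    ext p
    simp only [Submodule.mem_inf, mem_homogeneousSubmodule, Submodule.restrictScalars_mem,
      Submodule.mem_map, LinearMap.restrictScalars_apply]
    constructor
    · rintro ⟨hp, hJ⟩
      obtain ⟨ρ, hρ⟩ := mem_Jac.1 hJ
      refine ⟨vcomp k ρ, mem_Vk.2 (vcomp_homog k ρ), ?_⟩
      rw [L_vcomp hh, hρ]
      exact homogeneousComponent_eq_self ((mem_homogeneousSubmodule _ _).2 hp)
    · rintro ⟨ρ, hρ, rfl⟩
      refine ⟨?_, mem_Jac.2 ⟨ρ, rfl⟩⟩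
      rw [← vcomp_self (mem_Vk.1 hρ), L_vcomp hh]
      exact homogeneousComponent_isHomogeneous _ _
  rw [e1, finrank_Vk] at h1
  rw [e2] at h2
  have h3 : milnor4 f (k + m) = Module.finrank ℂ ((Sk (k + m)).map
    (Submodule.mkQ ((JacIdeal f).restrictScalars ℂ))) := rfl
  have h4 : arDim f k = Module.finrank ℂ (ARgr f k) := rfl
  omega

/-- degree part of the quotient ideal -/
def Wk (f : S4) (L : (Fin 4 → S4) →ₗ[S4] S4) (F : S4) (k : ℕ) : Submodule ℂ S4 :=
  ((ARgr f k).map (L.restrictScalars ℂ)).comap ((LinearMap.lsmul S4 S4 F).restrictScalars ℂ)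

lemma mem_Wk {f : S4} {L : (Fin 4 → S4) →ₗ[S4] S4} {F p : S4} {k : ℕ} :
    p ∈ Wk f L F k ↔ ∃ ρ, (ρ ∈ AR4 f ∧ VecHomog ρ k) ∧ L ρ = F * p := by
  simp [Wk, Submodule.mem_map, mem_ARgr]

section
variable {f : S4} {ρ1 ρ2 : Fin 4 → S4} {d m e1 e2 e3 : ℕ}
    {L : (Fin 4 → S4) →ₗ[S4] S4} {F : S4}

lemma Wk_le (D : LData f ρ1 ρ2 d m e1 e2 e3 L F) {k : ℕ} (hk : e3 ≤ k) :
    Wk f L F k ≤ Sk (k - e3) := by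
  intro p hp
  obtain ⟨ρ, ⟨-, hh⟩, hL⟩ := mem_Wk.1 hp
  rw [mem_homogeneousSubmodule]
  refine homog_div (m := m) D.Fh D.F0 ?_
  rw [mul_comm, ← hL, ← vcomp_self hh, L_vcomp D.Lh]
  have : k - e3 + m = k + (e1 + e2) := by have := D.he; omega
  rw [this]
  exact homogeneousComponent_isHomogeneous _ _

lemma ar_eq (D : LData f ρ1 ρ2 d m e1 e2 e3 L F) {k : ℕ} (hk1 : e1 ≤ k) (hk2 : e2 ≤ k) :
    arDim f k = Module.finrank ℂ (Sk (k - e1)) + Module.finrank ℂ (Sk (k - e2)) +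
      Module.finrank ℂ (Wk f L F k) := by
  have h1 := finrank_map_inf (L.restrictScalars ℂ) (ARgr f k)
  have h2 := finrank_comb ![ρ1, ρ2] ![e1, e2] k (by simp [Fin.forall_fin_two, hk1, hk2])
    (by simp [Fin.forall_fin_two, D.h1, D.h2])
    (by
      intro a ha
      simp only [Fin.sum_univ_two, Matrix.cons_val_zero, Matrix.cons_val_one] at ha
      rw [Fin.forall_fin_two]
      exact D.ind _ _ ha)
    (ARgr f k ⊓ LinearMap.ker (L.restrictScalars ℂ)) (by
      intro ρ
      simp only [Submodule.mem_inf, mem_ARgr, LinearMap.mem_ker, LinearMap.restrictScalars_apply,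
        Fin.sum_univ_two, Matrix.cons_val_zero, Matrix.cons_val_one]
      constructor
      · rintro ⟨⟨hA, hh⟩, h0⟩
        obtain ⟨a, b, hab⟩ := D.Lker ρ hA h0
        exact ⟨hh, ![a, b], by simpa using hab⟩
      · rintro ⟨hh, a, rfl⟩
        refine ⟨⟨?_, hh⟩, ?_⟩
        · exact Submodule.add_mem _ (Submodule.smul_mem _ _ D.r1) (Submodule.smul_mem _ _ D.r2)
        · rw [map_add, map_smul, map_smul, D.L1, D.L2]; simp)
  have h3 : (ARgr f k).map (L.restrictScalars ℂ) =
      (Wk f L F k).map ((LinearMap.lsmul S4 S4 F).restrictScalars ℂ) := by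
    rw [Wk, Submodule.map_comap_eq, inf_eq_right.2]
    rintro _ ⟨ρ, hρ, rfl⟩
    obtain ⟨c, hc⟩ := D.Ldvd ρ (mem_ARgr.1 hρ).1
    exact ⟨c, hc.symm⟩
  have h4 := finrank_map_inj ((LinearMap.lsmul S4 S4 F).restrictScalars ℂ) (Wk f L F k)
    (fun a b h => mul_left_cancel₀ D.F0 h)
  have h2' : Module.finrank ℂ ↥(ARgr f k ⊓ LinearMap.ker (L.restrictScalars ℂ)) =
      Module.finrank ℂ (Sk (k - e1)) + Module.finrank ℂ (Sk (k - e2)) := by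
    rw [h2, Fin.sum_univ_two]; rfl
  have h4' : Module.finrank ℂ ((ARgr f k).map (L.restrictScalars ℂ)) =
      Module.finrank ℂ (Wk f L F k) := by
    rw [h3]; exact h4
  change Module.finrank ℂ (ARgr f k) = _
  rw [← h2', ← h4']
  first
  | exact h1.symm
  | exact h1
  | (rw [add_comm]; exact h1.symm)
  | (rw [add_comm]; exact h1)

lemma ar_free (hF : IsFreeWith f e1 e2 e3) {k : ℕ} (hk1 : e1 ≤ k) (hk2 : e2 ≤ k) (hk3 : e3 ≤ k) :
    arDim f k = Module.finrank ℂ (Sk (k - e1)) + Module.finrank ℂ (Sk (k - e2)) +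
      Module.finrank ℂ (Sk (k - e3)) := by
  obtain ⟨-, -, r1, r2, r3, m1, m2, m3, hh1, hh2, hh3, hgen, hind⟩ := hF
  have h2 := finrank_comb ![r1, r2, r3] ![e1, e2, e3] k
    (by simp [Fin.forall_fin_succ, hk1, hk2, hk3])
    (by simp [Fin.forall_fin_succ, hh1, hh2, hh3])
    (by
      intro a ha
      simp [Fin.sum_univ_three] at ha
      have := hind _ _ _ ha
      simpa [Fin.forall_fin_succ] using this)
    (ARgr f k) (by
      intro ρ
      rw [mem_ARgr]
      constructor
      · rintro ⟨hA, hh⟩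
        obtain ⟨a, b, c, hab⟩ := hgen ρ hA
        exact ⟨hh, ![a, b, c], by simpa [Fin.sum_univ_three] using hab⟩
      · rintro ⟨hh, a, rfl⟩
        refine ⟨?_, hh⟩
        simp only [Fin.sum_univ_three]
        exact Submodule.add_mem _ (Submodule.add_mem _ (Submodule.smul_mem _ _ m1)
          (Submodule.smul_mem _ _ m2)) (Submodule.smul_mem _ _ m3))
  rw [Fin.sum_univ_three] at h2
  exact h2

/-- binary forms map -/
def binMap (i j : Fin 4) (k : ℕ) : Polynomial.degreeLT ℂ (k + 1) →ₗ[ℂ] S4 :=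
  (rename ![i, j] : MvPolynomial (Fin 2) ℂ →ₐ[ℂ] S4).toLinearMap ∘ₗ
    (Polynomial.homogenizeLM k) ∘ₗ (Polynomial.degreeLT ℂ (k + 1)).subtype

lemma binMap_apply (i j : Fin 4) (k : ℕ) (P : Polynomial.degreeLT ℂ (k + 1)) :
    binMap i j k P = rename ![i, j] ((P : Polynomial ℂ).homogenize k) := rfl

lemma propB_of_bound (D : LData f ρ1 ρ2 d m e1 e2 e3 L F) (c : ℕ) (N : ℕ)
    (h : ∀ k, N ≤ k → Module.finrank ℂ (Sk (k - e3)) ≤ Module.finrank ℂ (Wk f L F k) + c) :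
    PropB (quotI f L F) := by
  intro i j hij
  set k := c + N with hk
  have hnat : ∀ P : Polynomial.degreeLT ℂ (k + 1), (P : Polynomial ℂ).natDegree ≤ k := by
    intro P
    have := Polynomial.mem_degreeLT.1 P.2
    exact Polynomial.natDegree_le_iff_degree_le.2 (Order.le_of_lt_succ (by exact_mod_cast this))
  have hinj : Function.Injective (binMap i j k) := by
    rw [injective_iff_map_eq_zero]
    intro P hP
    rw [binMap_apply] at hP
    have hi2 : Function.Injective ![i, j] := by
      intro a b; fin_cases a <;> fin_cases b <;> simp [hij, hij.symm]
    have h1 := (map_eq_zero_iff _ (rename_injective _ hi2)).1 hP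
    exact Subtype.ext ((Polynomial.homogenize_eq_zero_iff (hnat P)).1 h1)
  have hfr : Module.finrank ℂ (LinearMap.range (binMap i j k)) = k + 1 := by
    rw [LinearMap.finrank_range_of_inj hinj, (Polynomial.degreeLTEquiv ℂ (k + 1)).finrank_eq]
    simp
  have hle : LinearMap.range (binMap i j k) ≤ Sk k := by
    rintro _ ⟨P, rfl⟩
    exact (Polynomial.isHomogeneous_homogenize (P : Polynomial ℂ)).rename_isHomogeneous
  have hWle : Wk f L F (k + e3) ≤ Sk k := by
    have := Wk_le D (k := k + e3) (by omega)
    rwa [Nat.add_sub_cancel] at this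
  have hb := h (k + e3) (by omega)
  rw [Nat.add_sub_cancel] at hb
  have : FiniteDimensional ℂ (Wk f L F (k + e3)) := Submodule.finiteDimensional_of_le hWle
  have : FiniteDimensional ℂ (LinearMap.range (binMap i j k)) := Submodule.finiteDimensional_of_le hle
  have h5 := Submodule.finrank_sup_add_finrank_inf_eq (Wk f L F (k + e3))
    (LinearMap.range (binMap i j k))
  have h6 := Submodule.finrank_mono (sup_le hWle hle)
  have h7 : 0 < Module.finrank ℂ
      (Wk f L F (k + e3) ⊓ LinearMap.range (binMap i j k) : Submodule ℂ S4) := by omega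
  have h8 : (Wk f L F (k + e3) ⊓ LinearMap.range (binMap i j k) : Submodule ℂ S4) ≠ ⊥ := by
    intro h0; rw [h0] at h7; simp at h7
  obtain ⟨p, ⟨hpW, P, rfl⟩, hp0⟩ := Submodule.exists_mem_ne_zero_of_ne_bot h8
  refine ⟨k, P, ?_, hnat P, ?_⟩
  · intro h0
    apply hp0
    rw [binMap_apply, h0]; simp
  · obtain ⟨ρ, ⟨hA, -⟩, hL⟩ := mem_Wk.1 hpW
    exact mem_quotI.2 ⟨ρ, hA, hL⟩

end

lemma lin_nonneg {A B : ℤ} {N : ℕ} (h : ∀ k : ℕ, N ≤ k → 0 ≤ A * k + B) : 0 ≤ A := by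
  by_contra hA
  have h1 := h (N + B.natAbs + 1) (by omega)
  push_cast at h1
  have h2 := le_abs_self B
  have h4 := abs_nonneg B
  have h3 : (0 : ℤ) ≤ N := by positivity
  have h5 : A ≤ -1 := by omega
  have h6 : A * (↑N + |B| + 1) ≤ -1 * (↑N + |B| + 1) :=
    mul_le_mul_of_nonneg_right h5 (by linarith)
  linarith

/-- **Theorem 1.4.** For a tame surface with `e1 + 2e2 ≤ d - 1` and one-dimensional singular
locus with `deg Σ = a` (the leading coefficient of the Hilbert polynomial of `M(f)`), one has
`deg Σ ≤ s₁² - s₂`, with equality iff `D` is free (with exponents `e1, e2, e3`). -/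
theorem thm_1_4 (f : S4) (d e1 e2 e3 : ℕ) (ρ1 ρ2 : Fin 4 → S4)
    (hd : 1 ≤ d) (hf : f.IsHomogeneous d) (hred : Squarefree f)
    (hmin : MinimalPair f ρ1 ρ2 e1 e2) (htame : TamePair f ρ1 ρ2)
    (he3 : e1 + e2 + e3 + 1 = d)
    (hdeg : e1 + 2 * e2 ≤ d - 1) (a b : ℤ)
    (hHilb : ∃ N : ℕ, ∀ k : ℕ, N ≤ k → (milnor4 f k : ℤ) = a * k + b) :
    a ≤ ((e1 : ℤ) + e2 + e3) ^ 2 - ((e1 : ℤ) * e2 + (e1 : ℤ) * e3 + (e2 : ℤ) * e3) ∧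
    (a = ((e1 : ℤ) + e2 + e3) ^ 2 - ((e1 : ℤ) * e2 + (e1 : ℤ) * e3 + (e2 : ℤ) * e3) ↔
      IsFreeWith f e1 e2 e3) := by
  obtain ⟨L, F, D⟩ := exists_LData f d e1 e2 e3 ρ1 ρ2 hd hf hred hmin htame he3
  obtain ⟨N, hN⟩ := hHilb
  have h12 : e1 ≤ e2 := hmin.2.2.2.2.2.2.1
  have h23 : e2 ≤ e3 := by omega
  set m := d - 1 with hm
  have hm' : (m : ℤ) = e1 + e2 + e3 := by have := D.he; omega
  set τ : ℤ := ((e1 : ℤ) + e2 + e3) ^ 2 - ((e1 : ℤ) * e2 + (e1 : ℤ) * e3 + (e2 : ℤ) * e3) with hτ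
  -- the Hilbert polynomial computation
  have main : ∀ W k : ℕ, N + e1 + e2 + e3 ≤ k →
      arDim f k + W = Module.finrank ℂ (Sk (k - e1)) + Module.finrank ℂ (Sk (k - e2)) +
        Module.finrank ℂ (Sk (k - e3)) →
      6 * (W : ℤ) = 6 * (τ - a) * k + (6 * (-a * m - b) + ((m : ℤ) ^ 3 + 6 * m ^ 2 + 11 * m + 6
        - 4 * 6 + (-(e1 : ℤ) ^ 3 + 6 * e1 ^ 2 - 11 * e1 + 6) + (-(e2 : ℤ) ^ 3 + 6 * e2 ^ 2 - 11 * e2 + 6)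
        + (-(e3 : ℤ) ^ 3 + 6 * e3 ^ 2 - 11 * e3 + 6))) := by
    intro W k hk hW
    have h1 := milnor_eq hf (m := m) (by omega) k
    have h2 := hN (k + m) (by omega)
    have s0 := Sk6 k
    have sm := Sk6 (k + m)
    have s1 := Sk6 (k - e1)
    have s2 := Sk6 (k - e2)
    have s3 := Sk6 (k - e3)
    rw [Nat.cast_sub (by omega)] at s1 s2 s3
    push_cast at sm h2
    zify at h1 hW
    rw [hm'] at sm h2 ⊢
    rw [hτ]
    linear_combination 6 * h1 + 6 * hW - 6 * h2 + sm - 4 * s0 + s1 + s2 + s3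
  set B : ℤ := (6 * (-a * m - b) + ((m : ℤ) ^ 3 + 6 * m ^ 2 + 11 * m + 6
        - 4 * 6 + (-(e1 : ℤ) ^ 3 + 6 * e1 ^ 2 - 11 * e1 + 6) + (-(e2 : ℤ) ^ 3 + 6 * e2 ^ 2 - 11 * e2 + 6)
        + (-(e3 : ℤ) ^ 3 + 6 * e3 ^ 2 - 11 * e3 + 6))) with hB
  have hle : ∀ k, e3 ≤ k → Module.finrank ℂ (Wk f L F k) ≤ Module.finrank ℂ (Sk (k - e3)) :=
    fun k hk => Submodule.finrank_mono (Wk_le D hk)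
  have hδ : ∀ k : ℕ, N + e1 + e2 + e3 ≤ k →
      6 * ((Module.finrank ℂ (Sk (k - e3)) - Module.finrank ℂ (Wk f L F k) : ℕ) : ℤ)
        = 6 * (τ - a) * k + B := by
    intro k hk
    refine main _ k hk ?_
    have h1 := ar_eq D (k := k) (by omega) (by omega)
    have h2 := hle k (by omega)
    omega
  have hineq : a ≤ τ := by
    have := lin_nonneg (A := 6 * (τ - a)) (B := B) (N := N + e1 + e2 + e3) (by
      intro k hk
      rw [← hδ k hk]; positivity)
    linarith
  refine ⟨hineq, fun heq => ?_, fun hfree => ?_⟩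
  · refine free_of_one D h12 h23 (one_mem_of_PropB D ?_)
    refine propB_of_bound D B.natAbs (N + e1 + e2 + e3) fun k hk => ?_
    have h1 := hδ k hk
    rw [heq, sub_self, mul_zero, zero_mul, zero_add] at h1
    omega
  · have h0 : ∀ k : ℕ, N + e1 + e2 + e3 ≤ k → (0 : ℤ) = 6 * (τ - a) * k + B := by
      intro k hk
      have := main 0 k hk (by rw [add_zero]; exact ar_free hfree (by omega) (by omega) (by omega))
      simpa using this
    have := lin_nonneg (A := - (6 * (τ - a))) (B := - B) (N := N + e1 + e2 + e3) (by
      intro k hk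
      have := h0 k hk
      linarith)
    linarith
end
end

section
/- Let f ∈ ℂ[x,y,z] be a reduced homogeneous polynomial of degree d defining a reduced plane curve C: f = 0 in P² which is not a cone, i.e., mdr(f) > 0, where mdr(f) is the minimal degree of a nonzero Jacobian syzygy of f. Set e1 = mdr(f) and e2 = d − 1 − e1, and assume 2e1 ≤ d − 1. Let τ(C) denote the global Tjurina number of C, equal to the eventual constant value of m(f)_k = dim_ℂ (S/J_f)_k for k sufficiently large. Then τ(C) ≤ (e1 + e2)² − e1·e2, and equality holds if and only if C is a free curve, i.e., the syzygy module AR(f) ⊆ S³ is a free graded S-module (of rank 2, with a homogeneous basis of degrees e1, e2). -/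
open MvPolynomial

noncomputable section

/-- The polynomial ring `S = ℂ[x,y,z]`. -/
abbrev S3 : Type := MvPolynomial (Fin 3) ℂ

/-- The `S`-linear map sending `ρ = (α,β,γ)` to `α fₓ + β f_y + γ f_z`. -/
def jacPair3 (f : S3) : (Fin 3 → S3) →ₗ[S3] S3 where
  toFun ρ := ∑ i, ρ i * pderiv i f
  map_add' a b := by simp [add_mul, Finset.sum_add_distrib]
  map_smul' c a := by simp [Finset.mul_sum, mul_assoc]

/-- `AR(f)`: the `S`-module of all Jacobian syzygies of `f`. -/
def AR3 (f : S3) : Submodule S3 (Fin 3 → S3) := LinearMap.ker (jacPair3 f)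

/-- A vector of polynomials is homogeneous of degree `q` if each component is. -/
def VecHomog3 (ρ : Fin 3 → S3) (q : ℕ) : Prop := ∀ i, (ρ i).IsHomogeneous q

/-- The Jacobian ideal of `f`. -/
def JacIdeal3 (f : S3) : Ideal S3 := Ideal.span (Set.range fun i : Fin 3 => pderiv i f)

/-- `m(f)_k = dim_ℂ M(f)_k`, the dimension of the degree-`k` part of the Milnor algebra. -/
def milnor3 (f : S3) (k : ℕ) : ℕ :=
  Module.finrank ℂ ((homogeneousSubmodule (Fin 3) ℂ k).map
    (Submodule.mkQ ((JacIdeal3 f).restrictScalars ℂ)))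

/-- `C : f = 0` is a free curve with exponents `d1, d2`: `AR(f)` is a free graded
`S`-module with a homogeneous basis of degrees `d1, d2`. -/
def IsFreeCurveWith (f : S3) (d1 d2 : ℕ) : Prop :=
  ∃ ρ1 ρ2 : Fin 3 → S3,
    ρ1 ∈ AR3 f ∧ ρ2 ∈ AR3 f ∧ VecHomog3 ρ1 d1 ∧ VecHomog3 ρ2 d2 ∧
    (∀ ρ ∈ AR3 f, ∃ a b : S3, ρ = a • ρ1 + b • ρ2) ∧
    (∀ a b : S3, a • ρ1 + b • ρ2 = 0 → a = 0 ∧ b = 0)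

lemma dW_comp_mul (a g : S3) (n D : ℕ) (hg : g.IsHomogeneous D) :
    homogeneousComponent (n + D) (a * g) = homogeneousComponent n a * g := by
  have key : ∀ i, homogeneousComponent (n + D) (homogeneousComponent i a * g)
      = if i = n then homogeneousComponent i a * g else 0 := by
    intro i
    have : homogeneousComponent i a * g ∈ homogeneousSubmodule (Fin 3) ℂ (i + D) :=
      (homogeneousComponent_isHomogeneous i a).mul hg
    rw [homogeneousComponent_of_mem this]
    simp [eq_comm]
  conv_lhs => rw [← sum_homogeneousComponent a, Finset.sum_mul, map_sum]
  simp_rw [key]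
  rw [Finset.sum_ite_eq']
  split_ifs with h
  · rfl
  · rw [homogeneousComponent_eq_zero, zero_mul]
    simp at h; omega

/-- dimension of the degree `n` part of `S` -/
def dWdim (n : ℕ) : ℕ := Module.finrank ℂ (homogeneousSubmodule (Fin 3) ℂ n)

lemma dW_finrank (n : ℕ) :
    2 * dWdim n = (n + 1) * (n + 2) := by
  have h1 : dWdim n
      = (Finset.finsuppAntidiag (Finset.univ : Finset (Fin 3)) n).card := by
    rw [dWdim, homogeneousSubmodule_eq_finsupp_supported]
    rw [LinearEquiv.finrank_eq (AddMonoidAlgebra.supportedEquivFinsupp (R := ℂ) (S := ℂ) _)]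
    have hs : {d : Fin 3 →₀ ℕ | d.degree = n}
      = ((Finset.finsuppAntidiag (Finset.univ : Finset (Fin 3)) n : Finset _) : Set (Fin 3 →₀ ℕ)) := by
      ext d
      simp [Finset.mem_finsuppAntidiag, Finsupp.degree_eq_sum]
    rw [hs, Module.finrank_finsupp_self]
    simp
  rw [h1, Finset.card_finsuppAntidiag_nat_eq_choose]
  simp only [Finset.card_univ, Fintype.card_fin]
  have : 3 + n - 1 = n + 2 := by omega
  rw [this, ← Nat.choose_symm_of_eq_add (show n + 2 = 2 + n by omega), Nat.choose_two_right]
  have := Nat.div_mul_cancel (Nat.even_mul_pred_self (n+2)).two_dvd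
  rw [mul_comm, this]
  simp; ring

lemma dW_gauss {ι R : Type*} [CommRing R] [IsDomain R] [UniqueFactorizationMonoid R] (w : ι → R)
    (hw : ∀ p, Prime p → ∃ i, ¬ p ∣ w i) (a : R) (ha : a ≠ 0) :
    ∀ b, (∀ i, a ∣ b * w i) → a ∣ b := by
  induction a using UniqueFactorizationMonoid.induction_on_prime with
  | h₁ => exact absurd rfl ha
  | h₂ x hx => intro b _; exact hx.dvd
  | h₃ a p ha0 hp ih =>
    intro b hb
    obtain ⟨i, hi⟩ := hw p hp
    have : p ∣ b := ((hp.dvd_or_dvd ((dvd_mul_right p a).trans (hb i))).resolve_right hi)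
    obtain ⟨b', rfl⟩ := this
    refine mul_dvd_mul_left p (ih ha0 b' fun j => ?_)
    have := hb j
    rw [mul_assoc] at this
    exact (mul_dvd_mul_iff_left hp.ne_zero).1 this

lemma dW_par {ι R : Type*} [CommRing R] [IsDomain R] [UniqueFactorizationMonoid R] (w v : ι → R)
    (hw : ∀ p, Prime p → ∃ i, ¬ p ∣ w i) (hw0 : w ≠ 0) (h : ∀ i j, v i * w j = v j * w i) :
    ∃ c : R, v = c • w := by
  obtain ⟨k, hk⟩ := Function.ne_iff.1 hw0
  have hk : w k ≠ 0 := hk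
  obtain ⟨c, hc⟩ := dW_gauss w hw (w k) hk (v k) (fun i => ⟨v i, by rw [h]; ring⟩)
  refine ⟨c, funext fun i => ?_⟩
  apply mul_right_cancel₀ hk
  rw [h, hc]; simp; ring

lemma dW_const (p : S3) (h : ∀ i, pderiv i p = 0) : ∃ c, p = C c := by
  refine ⟨coeff 0 p, ?_⟩
  ext m
  rw [coeff_C]
  split_ifs with hm
  · rw [hm]
  · obtain ⟨i, hi⟩ := Finsupp.ne_iff.1 (Ne.symm hm)
    have h1 := coeff_pderiv (i := i) p (m - Finsupp.single i 1)
    rw [h i, coeff_zero] at h1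
    have h2 : m - Finsupp.single i 1 + Finsupp.single i 1 = m :=
      tsub_add_cancel_of_le (by simpa [Nat.one_le_iff_ne_zero] using hi)
    rw [h2] at h1
    have := mul_eq_zero.1 h1.symm
    refine this.resolve_right ?_
    norm_cast

lemma dW_deg_pderiv (p : S3) (i : Fin 3) (h : pderiv i p ≠ 0) :
    (pderiv i p).totalDegree < p.totalDegree := by
  rw [totalDegree, Finset.sup_lt_iff]
  · intro m hm
    rw [mem_support_iff, coeff_pderiv] at hm
    have : m + Finsupp.single i 1 ∈ p.support := by
      rw [mem_support_iff]; exact left_ne_zero_of_mul hm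
    have := le_totalDegree this
    rw [Finsupp.sum_add_index'] at this
    · simp at this; simpa using this
    · simp
    · simp
  · obtain ⟨m, hm⟩ := (support_nonempty.2 h)
    rw [mem_support_iff, coeff_pderiv] at hm
    have : m + Finsupp.single i 1 ∈ p.support := by
      rw [mem_support_iff]; exact left_ne_zero_of_mul hm
    have := le_totalDegree this
    rw [Finsupp.sum_add_index'] at this
    · simp at this; simp; omega
    · simp
    · simp

lemma dW_grad_prim (f : S3) (d : ℕ) (hd : 1 ≤ d) (hf : f.IsHomogeneous d) (hred : Squarefree f)
    (p : S3) (hp : Prime p) : ∃ i, ¬ p ∣ pderiv i f := by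
  by_contra hcon
  push Not at hcon
  have h1 : p ∣ (d : S3) * f := by
    have := hf.sum_X_mul_pderiv
    rw [nsmul_eq_mul] at this
    rw [← this]
    exact Finset.dvd_sum fun i _ => (hcon i).mul_left _
  have h2 : p ∣ f := by
    refine (hp.dvd_or_dvd h1).resolve_left fun h => hp.not_isUnit (isUnit_of_dvd_unit h ?_)
    have : ((d : S3)) = C (d : ℂ) := by simp
    rw [this]
    exact (IsUnit.mk0 (d : ℂ) (by norm_cast; omega)).map C
  obtain ⟨g, rfl⟩ := h2
  have hg : ¬ p ∣ g := by
    rintro ⟨g', rfl⟩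
    exact hp.not_isUnit (hred p ⟨g', by ring⟩)
  have h3 : ∀ i, p ∣ pderiv i p := by
    intro i
    have := hcon i
    rw [pderiv_mul] at this
    have := (dvd_add_left (dvd_mul_right p _)).1 this
    exact (hp.dvd_or_dvd this).resolve_right hg
  have h4 : ∀ i, pderiv i p = 0 := by
    intro i
    by_contra h
    exact absurd (totalDegree_le_of_dvd_of_isDomain (h3 i) h) (not_le.2 (dW_deg_pderiv p i h))
  obtain ⟨c, rfl⟩ := dW_const p h4
  have hc : c ≠ 0 := by rintro rfl; exact hp.ne_zero (by simp)
  exact hp.not_isUnit ((IsUnit.mk0 c hc).map C)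

lemma dW_regular (N : ℕ) (p : S3)
    (h : ∃ q r : S3, X 2 ^ N * p = q * X 0 ^ N + r * X 1 ^ N) :
    ∃ u v : S3, p = u * X 0 ^ N + v * X 1 ^ N := by
  have key : ∀ q : S3, (∃ u v : S3, q = u * X 0 ^ N + v * X 1 ^ N) ↔
      ∀ m ∈ q.support, N ≤ m 0 ∨ N ≤ m 1 := by
    intro q
    have := mem_ideal_span_monomial_image (x := q)
      (s := {Finsupp.single 0 N, Finsupp.single (1 : Fin 3) N})
    simp only [Set.image_pair, Ideal.mem_span_pair, Set.mem_insert_iff, Set.mem_singleton_iff,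
      exists_eq_or_imp, exists_eq_left, Finsupp.single_le_iff] at this
    rw [← this]
    simp only [X_pow_eq_monomial, eq_comm]
  rw [key]
  obtain ⟨q, r, h⟩ := h
  have h' := (key _).1 ⟨q, r, h⟩
  intro m hm
  have := h' (m + Finsupp.single 2 N) (by
    rw [mem_support_iff, X_pow_eq_monomial, add_comm, coeff_monomial_mul]
    simpa using hm)
  simpa using this

lemma dW_mem_AR (f : S3) (ρ : Fin 3 → S3) :
    ρ ∈ AR3 f ↔ ρ 0 * pderiv 0 f + ρ 1 * pderiv 1 f + ρ 2 * pderiv 2 f = 0 := by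
  rw [AR3, LinearMap.mem_ker]
  simp [jacPair3, Fin.sum_univ_three]

/-- The gradient of `f`. -/
def dWgrad (f : S3) : Fin 3 → S3 := fun i => pderiv i f

/-- Degree `n` component of a vector. -/
def dWcomp (n : ℕ) (ρ : Fin 3 → S3) : Fin 3 → S3 := fun i => homogeneousComponent n (ρ i)

lemma dWcomp_homog (n : ℕ) (ρ : Fin 3 → S3) : VecHomog3 (dWcomp n ρ) n :=
  fun i => homogeneousComponent_isHomogeneous n (ρ i)

lemma dWcomp_mem (f : S3) (D n : ℕ) (hD : VecHomog3 (dWgrad f) D) (ρ : Fin 3 → S3)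
    (h : ρ ∈ AR3 f) : dWcomp n ρ ∈ AR3 f := by
  rw [dW_mem_AR] at *
  have := congrArg (homogeneousComponent (n + D)) h
  rw [map_add, map_add, map_zero, dW_comp_mul _ (pderiv 0 f) n D (hD 0), dW_comp_mul _ (pderiv 1 f) n D (hD 1),
    dW_comp_mul _ (pderiv 2 f) n D (hD 2)] at this
  exact this

lemma dW_smul_mem (f : S3) (c : S3) (hc : c ≠ 0) (ρ : Fin 3 → S3) (h : c • ρ ∈ AR3 f) :
    ρ ∈ AR3 f := by
  rw [dW_mem_AR] at *
  simp only [Pi.smul_apply, smul_eq_mul] at h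
  apply mul_left_cancel₀ hc
  rw [mul_zero, ← h]; ring

lemma dW_prim (f : S3) (D e1 : ℕ) (hD : VecHomog3 (dWgrad f) D)
    (hmdrmin : ∀ ρ ∈ AR3 f, ∀ q : ℕ, ρ ≠ 0 → VecHomog3 ρ q → e1 ≤ q)
    (ρ : Fin 3 → S3) (hρ : ρ ∈ AR3 f) (hρ0 : ρ ≠ 0) (hρh : VecHomog3 ρ e1)
    (p : S3) (hp : Prime p) : ∃ i, ¬ p ∣ ρ i := by
  by_contra hcon
  push Not at hcon
  choose σ hσ using hcon
  have hσ' : ρ = p • σ := funext hσ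
  obtain ⟨k, hk⟩ := Function.ne_iff.1 hρ0
  have hk : ρ k ≠ 0 := hk
  have hk' : σ k ≠ 0 := fun h => hk (by rw [hσ, h, mul_zero])
  have hσm : σ ∈ AR3 f := dW_smul_mem f p hp.ne_zero σ (hσ' ▸ hρ)
  have hdeg : (σ k).totalDegree < e1 := by
    have h1 := (hρh k).totalDegree hk
    rw [hσ, totalDegree_mul_of_isDomain hp.ne_zero hk'] at h1
    have : p.totalDegree ≠ 0 := by
      intro h
      rw [totalDegree_eq_zero_iff_eq_C] at h
      have hc : coeff 0 p ≠ 0 := by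
        intro h0; rw [h0] at h; exact hp.ne_zero (by simpa using h)
      exact hp.not_isUnit (h ▸ (IsUnit.mk0 _ hc).map C)
    omega
  have : ∃ q < e1, homogeneousComponent q (σ k) ≠ 0 := by
    by_contra hall
    push Not at hall
    apply hk'
    rw [← sum_homogeneousComponent (σ k)]
    refine Finset.sum_eq_zero fun i hi => hall i ?_
    simp at hi; omega
  obtain ⟨q, hq, hq0⟩ := this
  have := hmdrmin (dWcomp q σ) (dWcomp_mem f D q hD σ hσm) q
    (fun h => hq0 (congrFun h k)) (dWcomp_homog q σ)
  omega

lemma dW_cross_mem (f : S3) (hg : ∀ p, Prime p → ∃ i, ¬ p ∣ dWgrad f i) (hg0 : dWgrad f ≠ 0)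
    (ρ σ : Fin 3 → S3) (hρ : ρ ∈ AR3 f) (hσ : σ ∈ AR3 f) :
    ∃ h : S3, crossProduct ρ σ = h • dWgrad f := by
  rw [dW_mem_AR] at *
  apply dW_par _ _ hg hg0
  intro i j
  rw [cross_apply]
  fin_cases i <;> fin_cases j <;> simp [dWgrad] <;> grobner

lemma dW_cross_zero (ρ σ : Fin 3 → S3) (hg : ∀ p, Prime p → ∃ i, ¬ p ∣ ρ i) (hg0 : ρ ≠ 0)
    (h : crossProduct ρ σ = 0) : ∃ g : S3, σ = g • ρ := by
  apply dW_par _ _ hg hg0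
  rw [cross_apply] at h
  have h0 := congrFun h 0
  have h1 := congrFun h 1
  have h2 := congrFun h 2
  simp at h0 h1 h2
  intro i j
  fin_cases i <;> fin_cases j <;> simp <;> grobner

lemma dW_mem_of_cross (f : S3) (ρ σ : Fin 3 → S3) (h : S3) (hh : h ≠ 0)
    (hc : crossProduct ρ σ = h • dWgrad f) : σ ∈ AR3 f := by
  rw [dW_mem_AR]
  apply mul_left_cancel₀ hh
  rw [cross_apply] at hc
  have h0 := congrFun hc 0
  have h1 := congrFun hc 1
  have h2 := congrFun hc 2
  simp [dWgrad] at h0 h1 h2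
  grobner

lemma dW_smul_comp (v w : Fin 3 → S3) (h : S3) (n D : ℕ) (hw : VecHomog3 w D)
    (hv : VecHomog3 v (n + D)) (e : v = h • w) : v = homogeneousComponent n h • w := by
  funext i
  have := dW_comp_mul h (w i) n D (hw i)
  have e' : h * w i = v i := by rw [e]; rfl
  rw [e', homogeneousComponent_eq_self (hv i)] at this
  exact this

lemma dW_cross_homog (ρ σ : Fin 3 → S3) (a b : ℕ) (h1 : VecHomog3 ρ a) (h2 : VecHomog3 σ b) :
    VecHomog3 (crossProduct ρ σ) (a + b) := by
  intro i
  rw [cross_apply]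
  fin_cases i <;> exact ((h1 _).mul (h2 _)).sub ((h1 _).mul (h2 _))

lemma dW_cross_comp (ρ σ : Fin 3 → S3) (a b : ℕ) (h1 : VecHomog3 ρ a) :
    crossProduct ρ (dWcomp b σ) = dWcomp (b + a) (crossProduct ρ σ) := by
  have key : ∀ i j, homogeneousComponent (b + a) (ρ i * σ j)
      = ρ i * homogeneousComponent b (σ j) := by
    intro i j
    rw [mul_comm, dW_comp_mul _ _ _ _ (h1 i), mul_comm]
  funext i
  simp only [dWcomp]
  rw [cross_apply, cross_apply]
  fin_cases i <;> simp [dWcomp, key]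

/-- the key depth argument -/
lemma dW_depth (f : S3) (ρ : Fin 3 → S3) (hg : ∀ p, Prime p → ∃ i, ¬ p ∣ ρ i) (hg0 : ρ ≠ 0)
    (N : ℕ) (a : Fin 3 → Fin 3 → S3)
    (ha : ∀ i, crossProduct ρ (a i) = (X i ^ N : S3) • dWgrad f) :
    ∃ σ, crossProduct ρ σ = dWgrad f := by
  have hX : ∀ i : Fin 3, (X i ^ N : S3) ≠ 0 := fun i => pow_ne_zero _ (X_ne_zero i)
  have hz : ∀ i j, ∃ g : S3, (X j ^ N : S3) • a i - (X i ^ N : S3) • a j = g • ρ := by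
    intro i j
    apply dW_cross_zero ρ _ hg hg0
    rw [map_sub, map_smul, map_smul, ha, ha, smul_smul, smul_smul, mul_comm, sub_self]
  obtain ⟨p, hp⟩ := hz 0 1
  obtain ⟨q, hq⟩ := hz 1 2
  obtain ⟨r, hr⟩ := hz 2 0
  obtain ⟨k, hk⟩ := Function.ne_iff.1 hg0
  have hk : ρ k ≠ 0 := hk
  have rel : X 2 ^ N * p + X 0 ^ N * q + X 1 ^ N * r = 0 := by
    apply mul_right_cancel₀ hk
    have h1 := congrFun hp k
    have h2 := congrFun hq k
    have h3 := congrFun hr k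
    simp at h1 h2 h3
    linear_combination (-(X 2 ^ N : S3)) * h1 - (X 0 ^ N : S3) * h2 - (X 1 ^ N : S3) * h3
  obtain ⟨u, v, huv⟩ := dW_regular N p ⟨-q, -r, by linear_combination rel⟩
  have h1 : ∀ i, (X 1 ^ N : S3) * (a 0 i - v * ρ i) = X 0 ^ N * (a 1 i + u * ρ i) := by
    intro i
    have := congrFun hp i
    simp at this
    rw [huv] at this
    linear_combination this
  have hd : ∀ i, (X 0 ^ N : S3) ∣ a 0 i - v * ρ i := by
    intro i
    have hr : IsRelPrime (X 0 ^ N : S3) (X 1 ^ N) := by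
      apply IsRelPrime.pow
      apply (Irreducible.isRelPrime_iff_not_dvd (X_prime).irreducible).2
      intro h
      have := (X_dvd_X (R := ℂ) (i := (0 : Fin 3)) (j := 1)).1 h
      simp at this
    exact hr.dvd_of_dvd_mul_left ⟨_, h1 i⟩
  choose σ hσ using hd
  refine ⟨σ, ?_⟩
  have h2 : (X 0 ^ N : S3) • σ = a 0 - v • ρ := by
    funext i; simp [hσ]
  have h3 := congrArg (crossProduct ρ) h2
  rw [map_sub, map_smul, map_smul, cross_self, ha, smul_zero, sub_zero] at h3
  exact smul_right_injective _ (hX 0) h3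

lemma dW_free (f : S3) (e1 e2 : ℕ) (hD : VecHomog3 (dWgrad f) (e1 + e2))
    (hf : ∀ p, Prime p → ∃ i, ¬ p ∣ dWgrad f i) (hf0 : dWgrad f ≠ 0)
    (ρ : Fin 3 → S3) (hρ : ρ ∈ AR3 f) (hρh : VecHomog3 ρ e1)
    (hg : ∀ p, Prime p → ∃ i, ¬ p ∣ ρ i) (hg0 : ρ ≠ 0)
    (N : ℕ) (a : Fin 3 → Fin 3 → S3)
    (ha : ∀ i, crossProduct ρ (a i) = (X i ^ N : S3) • dWgrad f) :
    IsFreeCurveWith f e1 e2 := by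
  obtain ⟨σ, hσ⟩ := dW_depth f ρ hg hg0 N a ha
  have h2 : crossProduct ρ (dWcomp e2 σ) = dWgrad f := by
    rw [dW_cross_comp _ _ e1 e2 hρh, hσ]
    funext i
    rw [add_comm]
    exact homogeneousComponent_eq_self (hD i)
  have h2' := dW_mem_of_cross f ρ (dWcomp e2 σ) 1 one_ne_zero (by rw [h2, one_smul])
  refine ⟨ρ, dWcomp e2 σ, hρ, h2', hρh, dWcomp_homog _ _, ?_, ?_⟩
  · intro τ hτ
    obtain ⟨h, hh⟩ := dW_cross_mem f hf hf0 ρ τ hρ hτ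
    obtain ⟨g, hg⟩ := dW_cross_zero ρ (τ - h • dWcomp e2 σ) hg hg0 (by
      rw [map_sub, map_smul, h2, hh, sub_self])
    exact ⟨g, h, by rw [← hg]; simp⟩
  · intro a b hab
    have h3 := congrArg (crossProduct ρ) hab
    rw [map_add, map_smul, map_smul, cross_self, h2, smul_zero, zero_add, map_zero] at h3
    have hb : b = 0 := (smul_eq_zero.1 h3).resolve_right hf0
    refine ⟨?_, hb⟩
    rw [hb, zero_smul, add_zero] at hab
    exact (smul_eq_zero.1 hab).resolve_right hg0

lemma dW_finrank_map_add {M M' : Type*} [AddCommGroup M] [Module ℂ M] [AddCommGroup M']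
    [Module ℂ M'] (g : M →ₗ[ℂ] M') (p : Submodule ℂ M) [FiniteDimensional ℂ p] :
    Module.finrank ℂ (p.map g) + Module.finrank ℂ (p ⊓ LinearMap.ker g : Submodule ℂ M)
      = Module.finrank ℂ p := by
  have h := LinearMap.finrank_range_add_finrank_ker (g.domRestrict p)
  rw [LinearMap.range_domRestrict] at h
  rw [← h]
  congr 1
  rw [← Submodule.map_comap_subtype, Submodule.finrank_map_subtype_eq]
  rfl

/-- homogeneous vectors -/
def dWV (n : ℕ) : Submodule ℂ (Fin 3 → S3) where
  carrier := {v | VecHomog3 v n}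
  add_mem' ha hb := fun i => (ha i).add (hb i)
  zero_mem' := fun _ => isHomogeneous_zero _ _ _
  smul_mem' c _ hx := fun i => (homogeneousSubmodule (Fin 3) ℂ n).smul_mem c (hx i)

/-- components equivalence -/
def dWVequiv (n : ℕ) : dWV n ≃ₗ[ℂ] (Fin 3 → homogeneousSubmodule (Fin 3) ℂ n) where
  toFun v i := ⟨v.1 i, v.2 i⟩
  map_add' _ _ := rfl
  map_smul' _ _ := rfl
  invFun w := ⟨fun i => (w i).1, fun i => (w i).2⟩
  left_inv _ := rfl
  right_inv _ := rfl

instance dWfin0 (n : ℕ) : FiniteDimensional ℂ (homogeneousSubmodule (Fin 3) ℂ n) :=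
  Module.Finite.iff_fg.2 (homogeneousSubmodule_fg (Fin 3) ℂ n)

instance dWfin1 (n : ℕ) : FiniteDimensional ℂ (dWV n) :=
  LinearEquiv.finiteDimensional (dWVequiv n).symm

lemma dWV_finrank (n : ℕ) :
    Module.finrank ℂ (dWV n) = 3 * dWdim n := by
  rw [LinearEquiv.finrank_eq (dWVequiv n), Module.finrank_pi_fintype]
  simp [dWdim]

/-- homogeneous syzygies -/
def dWA (f : S3) (n : ℕ) : Submodule ℂ (Fin 3 → S3) :=
  dWV n ⊓ (AR3 f).restrictScalars ℂ

instance dWfin2 (f : S3) (n : ℕ) : FiniteDimensional ℂ (dWA f n) :=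
  Submodule.finiteDimensional_of_le (inf_le_left : _ ≤ dWV n)

lemma dW_mem_dWA (f : S3) (n : ℕ) (ρ : Fin 3 → S3) :
    ρ ∈ dWA f n ↔ VecHomog3 ρ n ∧ ρ ∈ AR3 f := Iff.rfl

lemma dW_mem_J (f : S3) (g : S3) : g ∈ JacIdeal3 f ↔ ∃ ρ, jacPair3 f ρ = g := by
  rw [JacIdeal3, Ideal.mem_span_range_iff_exists_fun]
  rfl

lemma dW_milnor (f : S3) (D n : ℕ) (hD : VecHomog3 (dWgrad f) D) :
    milnor3 f (n + D) + 3 * dWdim n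
      = dWdim (n + D) + Module.finrank ℂ (dWA f n) := by
  have h1 : milnor3 f (n + D) + Module.finrank ℂ (homogeneousSubmodule (Fin 3) ℂ (n + D) ⊓
      LinearMap.ker (Submodule.mkQ ((JacIdeal3 f).restrictScalars ℂ)) : Submodule ℂ S3)
      = dWdim (n + D) := dW_finrank_map_add (Submodule.mkQ ((JacIdeal3 f).restrictScalars ℂ))
    (homogeneousSubmodule (Fin 3) ℂ (n + D))
  have h2 := dW_finrank_map_add ((jacPair3 f).restrictScalars ℂ) (dWV n)
  rw [dWV_finrank] at h2
  have h3 : (homogeneousSubmodule (Fin 3) ℂ (n + D) ⊓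
      LinearMap.ker (Submodule.mkQ ((JacIdeal3 f).restrictScalars ℂ)))
      = (dWV n).map ((jacPair3 f).restrictScalars ℂ) := by
    rw [Submodule.ker_mkQ]
    ext g
    constructor
    · rintro ⟨hg1, hg2⟩
      have hg1 : g.IsHomogeneous (n + D) := hg1
      obtain ⟨ρ, hρ⟩ := (dW_mem_J f g).1 hg2
      refine ⟨dWcomp n ρ, dWcomp_homog n ρ, ?_⟩
      have := homogeneousComponent_eq_self hg1
      rw [← this, ← hρ]
      simp only [LinearMap.coe_restrictScalars, jacPair3, LinearMap.coe_mk, AddHom.coe_mk, map_sum]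
      exact Finset.sum_congr rfl fun i _ => (dW_comp_mul _ _ _ _ (hD i)).symm
    · rintro ⟨ρ, hρ, rfl⟩
      refine ⟨?_, (dW_mem_J f _).2 ⟨ρ, rfl⟩⟩
      exact IsHomogeneous.sum _ _ _ fun i _ => (hρ i).mul (hD i)
  have h4 : (dWV n ⊓ LinearMap.ker ((jacPair3 f).restrictScalars ℂ)) = dWA f n := rfl
  rw [h3] at h1
  rw [h4] at h2
  omega

/-- multiplication of a fixed vector by scalars -/
def dWmul (w : Fin 3 → S3) : S3 →ₗ[ℂ] (Fin 3 → S3) :=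
  (LinearMap.toSpanSingleton S3 (Fin 3 → S3) w).restrictScalars ℂ

lemma dWmul_apply (w : Fin 3 → S3) (a : S3) : dWmul w a = a • w := rfl

lemma dWmul_inj (w : Fin 3 → S3) (hw : w ≠ 0) : Function.Injective (dWmul w) :=
  smul_left_injective S3 hw

lemma dWmul_finrank (w : Fin 3 → S3) (hw : w ≠ 0) (n : ℕ) :
    Module.finrank ℂ ((homogeneousSubmodule (Fin 3) ℂ n).map (dWmul w)) = dWdim n :=
  (LinearEquiv.finrank_eq (Submodule.equivMapOfInjective _ (dWmul_inj w hw) _)).symm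

lemma dW_main (f : S3) (e1 e2 m : ℕ) (hD : VecHomog3 (dWgrad f) (e1 + e2))
    (hf : ∀ p, Prime p → ∃ i, ¬ p ∣ dWgrad f i) (hf0 : dWgrad f ≠ 0)
    (ρ : Fin 3 → S3) (hρ : ρ ∈ AR3 f) (hρh : VecHomog3 ρ e1)
    (hg : ∀ p, Prime p → ∃ i, ¬ p ∣ ρ i) (hg0 : ρ ≠ 0) :
    Module.finrank ℂ (dWA f (m + e1 + e2)) ≤
      dWdim (m + e2) +
      dWdim (m + e1) ∧
    (Module.finrank ℂ (dWA f (m + e1 + e2)) =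
      dWdim (m + e2) +
      dWdim (m + e1) → IsFreeCurveWith f e1 e2) := by
  have h1 := dW_finrank_map_add ((crossProduct ρ).restrictScalars ℂ) (dWA f (m + e1 + e2))
  have h2 : dWA f (m + e1 + e2) ⊓ LinearMap.ker ((crossProduct ρ).restrictScalars ℂ)
      = (homogeneousSubmodule (Fin 3) ℂ (m + e2)).map (dWmul ρ) := by
    ext σ
    constructor
    · rintro ⟨⟨hσ1, hσ2⟩, hσ3⟩
      obtain ⟨g, hg⟩ := dW_cross_zero ρ σ hg hg0 hσ3
      have := dW_smul_comp σ ρ g (m + e2) e1 hρh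
        (by rw [add_right_comm]; exact hσ1) hg
      exact ⟨_, homogeneousComponent_isHomogeneous _ g, this.symm⟩
    · rintro ⟨g, hg, rfl⟩
      have hg : g.IsHomogeneous (m + e2) := hg
      refine ⟨⟨fun i => ?_, (AR3 f).smul_mem g hρ⟩, ?_⟩
      · rw [add_right_comm]; exact hg.mul (hρh i)
      · change crossProduct ρ (g • ρ) = 0
        rw [map_smul, cross_self, smul_zero]
  have h3 : (dWA f (m + e1 + e2)).map ((crossProduct ρ).restrictScalars ℂ)
      ≤ (homogeneousSubmodule (Fin 3) ℂ (m + e1)).map (dWmul (dWgrad f)) := by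
    rintro _ ⟨σ, ⟨hσ1, hσ2⟩, rfl⟩
    obtain ⟨h, hh⟩ := dW_cross_mem f hf hf0 ρ σ hρ hσ2
    have h5 := dW_cross_homog ρ σ _ _ hρh hσ1
    rw [show e1 + (m + e1 + e2) = (m + e1) + (e1 + e2) by ring] at h5
    have := dW_smul_comp _ (dWgrad f) h (m + e1) (e1 + e2) hD h5 hh
    exact ⟨_, homogeneousComponent_isHomogeneous _ h, this.symm⟩
  rw [h2, dWmul_finrank _ hg0] at h1
  have h4 := Submodule.finrank_mono h3
  rw [dWmul_finrank _ hf0] at h4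
  refine ⟨by omega, fun heq => ?_⟩
  have h5 := Submodule.eq_of_le_of_finrank_eq h3 (by rw [dWmul_finrank _ hf0]; omega)
  have h6 : ∀ i : Fin 3, ∃ a : Fin 3 → S3,
      crossProduct ρ a = (X i ^ (m + e1) : S3) • dWgrad f := by
    intro i
    have : (X i ^ (m + e1) : S3) • dWgrad f
        ∈ (homogeneousSubmodule (Fin 3) ℂ (m + e1)).map (dWmul (dWgrad f)) :=
      ⟨_, isHomogeneous_X_pow i (m + e1), rfl⟩
    rw [← h5] at this
    obtain ⟨a, -, ha⟩ := this
    exact ⟨a, ha⟩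
  choose a ha using h6
  exact dW_free f e1 e2 hD hf hf0 ρ hρ hρh hg hg0 _ a ha

lemma dW_free_le (f : S3) (e1 e2 m : ℕ) (hfree : IsFreeCurveWith f e1 e2) :
    dWdim (m + e2) +
      dWdim (m + e1) ≤
    Module.finrank ℂ (dWA f (m + e1 + e2)) := by
  obtain ⟨ρ, σ, hρ, hσ, hρh, hσh, -, hli⟩ := hfree
  have hpr := Module.finrank_prod (R := ℂ) (M := homogeneousSubmodule (Fin 3) ℂ (m + e2))
    (M' := homogeneousSubmodule (Fin 3) ℂ (m + e1))
  refine le_of_eq_of_le hpr.symm ?_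
  let L : (homogeneousSubmodule (Fin 3) ℂ (m + e2) × homogeneousSubmodule (Fin 3) ℂ (m + e1))
      →ₗ[ℂ] (Fin 3 → S3) :=
    ((dWmul ρ).comp (Submodule.subtype _)).coprod ((dWmul σ).comp (Submodule.subtype _))
  have hL : ∀ x, L x = x.1.1 • ρ + x.2.1 • σ := fun x => rfl
  have hmem : ∀ x, L x ∈ dWA f (m + e1 + e2) := by
    intro x
    rw [hL]
    refine ⟨fun i => ?_, (AR3 f).add_mem ((AR3 f).smul_mem _ hρ) ((AR3 f).smul_mem _ hσ)⟩
    have h1 : (x.1.1).IsHomogeneous (m + e2) := x.1.2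
    have h2 : (x.2.1).IsHomogeneous (m + e1) := x.2.2
    refine IsHomogeneous.add ?_ (h2.mul (hσh i))
    rw [add_right_comm]
    exact h1.mul (hρh i)
  refine LinearMap.finrank_le_finrank_of_injective (f := L.codRestrict _ hmem) ?_
  rw [← LinearMap.ker_eq_bot, LinearMap.ker_codRestrict, LinearMap.ker_eq_bot']
  intro x hx
  rw [hL] at hx
  obtain ⟨h1, h2⟩ := hli _ _ hx
  exact Prod.ext (Subtype.ext h1) (Subtype.ext h2)

/-- **Theorem 1.1 (du Plessis–Wall).** For a reduced plane curve `C : f = 0` with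
`e1 = mdr(f) > 0`, `e2 = d - 1 - e1` and `2e1 ≤ d - 1`, the global Tjurina number satisfies
`τ(C) ≤ (e1 + e2)² - e1·e2`, with equality iff `C` is a free curve. -/
theorem thm_duPlessis_Wall (f : S3) (d e1 e2 : ℕ)
    (hd : 1 ≤ d) (hf : f.IsHomogeneous d) (hred : Squarefree f)
    (hmdr : ∃ ρ ∈ AR3 f, ρ ≠ 0 ∧ VecHomog3 ρ e1)
    (hmdrmin : ∀ ρ ∈ AR3 f, ∀ q : ℕ, ρ ≠ 0 → VecHomog3 ρ q → e1 ≤ q)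
    (he1pos : 0 < e1) (h2e1 : 2 * e1 ≤ d - 1) (he2 : e1 + e2 + 1 = d)
    (τ : ℕ) (hτ : ∃ N : ℕ, ∀ k : ℕ, N ≤ k → milnor3 f k = τ) :
    (τ : ℤ) ≤ ((e1 : ℤ) + e2) ^ 2 - (e1 : ℤ) * e2 ∧
    ((τ : ℤ) = ((e1 : ℤ) + e2) ^ 2 - (e1 : ℤ) * e2 ↔ IsFreeCurveWith f e1 e2) := by

  have hD : VecHomog3 (dWgrad f) (e1 + e2) := by
    intro i
    have := hf.pderiv (i := i)
    rwa [show d - 1 = e1 + e2 by omega] at this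
  have hp : ∀ p, Prime p → ∃ i, ¬ p ∣ dWgrad f i := dW_grad_prim f d hd hf hred
  have hf0 : dWgrad f ≠ 0 := by
    intro h
    obtain ⟨i, hi⟩ := hp (X 0) X_prime
    exact hi (by rw [h]; simp)
  obtain ⟨ρ, hρ, hρ0, hρh⟩ := hmdr
  have hprim := dW_prim f (e1 + e2) e1 hD hmdrmin ρ hρ hρ0 hρh
  obtain ⟨N, hN⟩ := hτ
  obtain ⟨hle, heq⟩ := dW_main f e1 e2 N hD hp hf0 ρ hρ hρh hprim hρ0
  have hge := dW_free_le f e1 e2 N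
  have hm := dW_milnor f (e1 + e2) (N + e1 + e2) hD
  rw [hN _ (by omega)] at hm
  have v1 := dW_finrank (N + e1 + e2)
  have v2 := dW_finrank (N + e1 + e2 + (e1 + e2))
  have v3 := dW_finrank (N + e2)
  have v4 := dW_finrank (N + e1)
  generalize dWdim (N + e1 + e2) = a1 at *
  generalize dWdim (N + e1 + e2 + (e1 + e2)) = a2 at *
  generalize dWdim (N + e2) = a3 at *
  generalize dWdim (N + e1) = a4 at *
  generalize Module.finrank ℂ (dWA f (N + e1 + e2)) = A at *
  have key : 2 * ((τ : ℤ) - (((e1 : ℤ) + e2) ^ 2 - (e1 : ℤ) * e2)) = 2 * ((A : ℤ) - (a3 + a4)) := by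
    zify at hm v1 v2 v3 v4
    linear_combination 2 * hm - 3 * v1 + v2 + v3 + v4
  refine ⟨by zify at hle; linarith, fun h => heq ?_, fun h => ?_⟩
  · zify; linarith
  · have := hge h
    have : A = a3 + a4 := le_antisymm hle this
    zify at this
    linarith
end
end

section
/- Let f ∈ ℂ[x,y,z,w] be a reduced homogeneous polynomial of degree d defining a surface D: f = 0 in P³, tame with respect to the pair ρ1, ρ2 of degrees e1 = deg ρ1 ≤ e2 = deg ρ2, and set e3 = d − 1 − e1 − e2. Define v': AR(f) → S by letting v'(ρ) be the unique polynomial h with det M(E,ρ1,ρ2,ρ) = h·f, where M(E,ρ1,ρ2,ρ) is the 4×4 matrix with rows (x,y,z,w), ρ1, ρ2, ρ. Then: (i) the map (a,b) ↦ a·ρ1 + b·ρ2 from S² to AR(f) is injective; (ii) if ρ is homogeneous of degree e then v'(ρ) is homogeneous of degree e − e3; and (iii) v'(ρ) = 0 if and only if ρ ∈ S·ρ1 + S·ρ2. In other words, there is an exact sequence of graded S-modules 0 → S(−e1) ⊕ S(−e2) → AR(f) → S(−e3). -/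
open MvPolynomial Matrix

noncomputable section

lemma aux_comp_mul {m : ℕ} (p g : S4) (hg : g.IsHomogeneous m) (k : ℕ) :
    homogeneousComponent (k + m) (p * g) = homogeneousComponent k p * g := by
  conv_lhs => rw [← sum_homogeneousComponent p, Finset.sum_mul, map_sum]
  have : ∀ i, homogeneousComponent (k + m) (homogeneousComponent i p * g) =
      if i = k then homogeneousComponent k p * g else 0 := by
    intro i
    rw [homogeneousComponent_of_mem ((mem_homogeneousSubmodule _ _).2
      ((homogeneousComponent_isHomogeneous i p).mul hg))]
    by_cases h : i = k
    · subst h; simp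
    · rw [if_neg h, if_neg (by omega)]
  simp_rw [this]
  rw [Finset.sum_ite_eq' (Finset.range (p.totalDegree + 1)) k fun _ => homogeneousComponent k p * g]
  split_ifs with h
  · rfl
  · rw [Finset.mem_range] at h
    rw [homogeneousComponent_eq_zero _ _ (by omega), zero_mul]

lemma aux_sum_comp {m : ℕ} (c ρ : Fin 4 → S4) (hc : ∀ i, (c i).IsHomogeneous m)
    (h : ∑ i, ρ i * c i = 0) (k : ℕ) :
    ∑ i, homogeneousComponent k (ρ i) * c i = 0 := by
  have h2 := congrArg (homogeneousComponent (k + m)) h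
  rw [map_sum, map_zero] at h2
  rw [← h2]
  exact Finset.sum_congr rfl fun i _ => (aux_comp_mul _ _ (hc i) k).symm

lemma aux_mem (f : S4) (ρ : Fin 4 → S4) : ρ ∈ AR4 f ↔ ∑ i, ρ i * pderiv i f = 0 := by
  rw [AR4, LinearMap.mem_ker]; rfl

lemma aux_AR_comp (f : S4) {d : ℕ} (hf : f.IsHomogeneous d) (ρ : Fin 4 → S4)
    (h : ρ ∈ AR4 f) (k : ℕ) : (fun i => homogeneousComponent k (ρ i)) ∈ AR4 f := by
  rw [aux_mem] at h ⊢
  exact aux_sum_comp (fun i => pderiv i f) ρ (fun i => hf.pderiv) h k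

lemma aux_det_homog {n : ℕ} (M : Matrix (Fin n) (Fin n) S4) (w : Fin n → ℕ)
    (h : ∀ i j, (M i j).IsHomogeneous (w i)) : M.det.IsHomogeneous (∑ i, w i) := by
  rw [← Matrix.det_transpose, Matrix.det_apply]
  refine IsHomogeneous.sum _ _ _ fun s _ => ?_
  have hp : (∏ i, Mᵀ (s i) i).IsHomogeneous (∑ i, w i) :=
    IsHomogeneous.prod _ _ _ fun i _ => h i (s i)
  rcases Int.units_eq_one_or (Equiv.Perm.sign s) with hs | hs <;> rw [hs]
  · simpa using hp
  · simpa using hp.neg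

lemma aux_EMat_homog {e1 e2 e : ℕ} {ρ1 ρ2 ρ : Fin 4 → S4} (h1 : VecHomog ρ1 e1)
    (h2 : VecHomog ρ2 e2) (h : VecHomog ρ e) :
    (EMat ρ1 ρ2 ρ).det.IsHomogeneous (1 + e1 + e2 + e) := by
  have := aux_det_homog (EMat ρ1 ρ2 ρ) ![1, e1, e2, e] (by
    intro i j
    fin_cases i
    · exact isHomogeneous_X _ _
    · exact h1 j
    · exact h2 j
    · exact h j)
  simpa [Fin.sum_univ_four] using this

lemma aux_EMat_lin (ρ1 ρ2 ρ : Fin 4 → S4) :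
    (EMat ρ1 ρ2 ρ).det = ∑ i, ρ i * (EMat ρ1 ρ2 (Pi.single i 1)).det := by
  have h : ∀ v, EMat ρ1 ρ2 v = (EMat ρ1 ρ2 0).updateRow 3 v := by
    intro v
    ext i j
    fin_cases i <;> simp [EMat, Matrix.updateRow_apply]
  have key : ∀ v, (EMat ρ1 ρ2 v).det = Matrix.cramer (EMat ρ1 ρ2 0)ᵀ v 3 := by
    intro v
    rw [h, Matrix.cramer_transpose_apply]
  simp_rw [key]
  conv_lhs => rw [pi_eq_sum_univ' ρ]
  rw [map_sum, Finset.sum_apply]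
  refine Finset.sum_congr rfl fun i _ => ?_
  have : (fun j => if i = j then (1 : S4) else 0) = Pi.single i 1 := by
    ext1 j; simp [Pi.single_apply, eq_comm]
  rw [← this, map_smul]
  simp

lemma aux_minors (f : S4) {d : ℕ} (hd : 1 ≤ d) (hf : f.IsHomogeneous d) (hf0 : f ≠ 0)
    {ρ1 ρ2 ρ : Fin 4 → S4} (h1 : ρ1 ∈ AR4 f) (h2 : ρ2 ∈ AR4 f) (h : ρ ∈ AR4 f)
    (hdet : (EMat ρ1 ρ2 ρ).det = 0) : MinorsVanish3 ρ1 ρ2 ρ := by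
  intro j
  rw [aux_mem] at h1 h2 h
  have hE := hf.sum_X_mul_pderiv
  have hv : EMat ρ1 ρ2 ρ *ᵥ (fun i => pderiv i f) = Pi.single 0 (d • f) := by
    ext1 i
    fin_cases i
    · simpa [EMat, Matrix.mulVec, dotProduct] using hE
    · simpa [EMat, Matrix.mulVec, dotProduct] using h1
    · simpa [EMat, Matrix.mulVec, dotProduct] using h2
    · simpa [EMat, Matrix.mulVec, dotProduct] using h
  have h3 : (EMat ρ1 ρ2 ρ).adjugate *ᵥ (EMat ρ1 ρ2 ρ *ᵥ (fun i => pderiv i f)) = 0 := by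
    rw [Matrix.mulVec_mulVec, Matrix.adjugate_mul, hdet]; simp
  rw [hv] at h3
  have h4 := congrFun h3 j
  rw [Matrix.mulVec_single] at h4
  have hdf : d • f ≠ 0 := by
    rw [nsmul_eq_mul]
    exact mul_ne_zero (by exact_mod_cast (by omega : d ≠ 0)) hf0
  have h5 : (EMat ρ1 ρ2 ρ).adjugate j 0 = 0 := by
    have h4' : (EMat ρ1 ρ2 ρ).adjugate j 0 * (d • f) = 0 := h4
    exact (mul_eq_zero.1 h4').resolve_right hdf
  rw [Matrix.adjugate_fin_succ_eq_det_submatrix] at h5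
  have h6 := (mul_eq_zero.1 h5).resolve_left (by simp)
  rw [← h6]
  congr 1

lemma aux_indep (f : S4) {d e1 e2 : ℕ} {ρ1 ρ2 : Fin 4 → S4} (hf : f.IsHomogeneous d)
    (hmin : MinimalPair f ρ1 ρ2 e1 e2) (a b : S4) (h : a • ρ1 + b • ρ2 = 0) :
    a = 0 ∧ b = 0 := by
  obtain ⟨h1, h10, h1h, h1min, h2, -, -, h2n, -⟩ := hmin
  obtain ⟨i0, hi0⟩ := Function.ne_iff.1 h10
  have hi0' : ρ1 i0 ≠ 0 := hi0
  have hco : ∀ i, a * ρ1 i + b * ρ2 i = 0 := fun i => congrFun h i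
  by_cases hb : b = 0
  · subst hb
    have := hco i0
    simp only [zero_mul, add_zero] at this
    exact ⟨(mul_eq_zero.1 this).resolve_right hi0', rfl⟩
  exfalso
  obtain ⟨a', b', c, hrel, ha', hb'⟩ := UniqueFactorizationMonoid.exists_reduced_factors' a b hb
  have hc : c ≠ 0 := by rintro rfl; simp at hb'; exact hb hb'.symm
  have hb0 : b' ≠ 0 := by rintro rfl; simp at hb'; exact hb hb'.symm
  have hco' : ∀ i, a' * ρ1 i + b' * ρ2 i = 0 := by
    intro i
    have := hco i
    rw [← ha', ← hb'] at this
    apply mul_left_cancel₀ hc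
    linear_combination this
  have hdvd : ∀ i, b' ∣ ρ1 i := by
    intro i
    have : b' ∣ a' * ρ1 i := ⟨-ρ2 i, by linear_combination hco' i⟩
    exact hrel.symm.dvd_of_dvd_mul_left this
  choose σ hσ using hdvd
  have hσAR : σ ∈ AR4 f := by
    rw [aux_mem] at h1 ⊢
    apply mul_left_cancel₀ hb0
    rw [mul_zero, ← h1, Finset.mul_sum]
    refine Finset.sum_congr rfl fun i _ => ?_
    rw [hσ i, mul_assoc]
  have hσ0 : σ i0 ≠ 0 := by
    intro h0; apply hi0'; rw [hσ, h0, mul_zero]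
  have htd : (ρ1 i0).totalDegree = b'.totalDegree + (σ i0).totalDegree := by
    rw [hσ i0]; exact totalDegree_mul_of_isDomain hb0 hσ0
  rw [(h1h i0).totalDegree hi0'] at htd
  have hle : e1 ≤ (σ i0).totalDegree := by
    by_contra! hlt
    apply hσ0
    rw [← sum_homogeneousComponent (σ i0)]
    refine Finset.sum_eq_zero fun k hk => ?_
    by_contra hne
    have := h1min _ (aux_AR_comp f hf σ hσAR k) k
      (fun h0 => hne (congrFun h0 i0)) (fun i => homogeneousComponent_isHomogeneous k _)
    rw [Finset.mem_range] at hk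
    omega
  have hb'c : b'.totalDegree = 0 := by omega
  rw [totalDegree_eq_zero_iff_eq_C] at hb'c
  set c0 := coeff 0 b'
  have hc0 : c0 ≠ 0 := by
    intro h0; rw [h0, map_zero] at hb'c; exact hb0 hb'c
  apply h2n (-(C c0⁻¹ * a'))
  ext1 i
  have h7 := hco' i
  rw [hb'c] at h7
  have h8 : (C c0⁻¹ : S4) * C c0 = 1 := by
    rw [← C_mul, inv_mul_cancel₀ hc0, C_1]
  show ρ2 i = -(C c0⁻¹ * a') * ρ1 i
  linear_combination (C c0⁻¹ : S4) * h7 - ρ2 i * h8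


/-- **Theorem 3.1.** For a tame surface there is an exact sequence
`0 → S(-e1) ⊕ S(-e2) → AR(f) → S(-e3)`: the map `(a,b) ↦ a·ρ1 + b·ρ2` is injective,
`v'(ρ)` (defined by `det M(E,ρ1,ρ2,ρ) = v'(ρ)·f`) is homogeneous of degree `e - e3` on
syzygies of degree `e`, and `v'(ρ) = 0` iff `ρ ∈ S·ρ1 + S·ρ2`. -/
theorem thm_3_1 (f : S4) (d e1 e2 e3 : ℕ) (ρ1 ρ2 : Fin 4 → S4)
    (hd : 1 ≤ d) (hf : f.IsHomogeneous d) (hred : Squarefree f)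
    (hmin : MinimalPair f ρ1 ρ2 e1 e2) (htame : TamePair f ρ1 ρ2)
    (he3 : e1 + e2 + e3 + 1 = d) :
    (Function.Injective fun p : S4 × S4 => p.1 • ρ1 + p.2 • ρ2) ∧
    (∀ ρ ∈ AR4 f, ∀ (e : ℕ) (h : S4), VecHomog ρ e → (EMat ρ1 ρ2 ρ).det = h * f →
      h.IsHomogeneous (e - e3)) ∧
    (∀ ρ ∈ AR4 f, ∀ h : S4, (EMat ρ1 ρ2 ρ).det = h * f →
      (h = 0 ↔ ∃ a b : S4, ρ = a • ρ1 + b • ρ2)) := by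
  have hf0 : f ≠ 0 := hred.ne_zero
  have hmin' := hmin
  obtain ⟨h1, h10, h1h, h1min, h2, h2h, -, h2n, -⟩ := hmin'
  refine ⟨?_, ?_, ?_⟩
  · rintro ⟨a, b⟩ ⟨a', b'⟩ h
    have h' : a • ρ1 + b • ρ2 = a' • ρ1 + b' • ρ2 := h
    have := aux_indep f hf hmin (a - a') (b - b') (by
      rw [sub_smul, sub_smul, sub_add_sub_comm, h', sub_self])
    rw [Prod.mk.injEq]
    exact ⟨sub_eq_zero.1 this.1, sub_eq_zero.1 this.2⟩
  · intro ρ hρ e h hρh hdet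
    have hh := aux_EMat_homog h1h h2h hρh
    rw [hdet] at hh
    -- every component of `h` of degree other than `e - e3` vanishes
    have key : ∀ k, k + e3 ≠ e → homogeneousComponent k h = 0 := by
      intro k hk
      have hc := aux_comp_mul h f hf k
      rw [homogeneousComponent_of_mem ((mem_homogeneousSubmodule _ _).2 hh),
        if_neg (by omega)] at hc
      exact (mul_eq_zero.1 hc.symm).resolve_right hf0
    rw [← sum_homogeneousComponent h]
    refine IsHomogeneous.sum _ _ _ fun k _ => ?_
    by_cases hk : k + e3 = e
    · have : e - e3 = k := by omega
      rw [this]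
      exact homogeneousComponent_isHomogeneous k h
    · rw [key k hk]
      exact isHomogeneous_zero _ _ _
  · intro ρ hρ h hdet
    constructor
    · rintro rfl
      rw [zero_mul] at hdet
      suffices hs : ρ ∈ Submodule.span S4 {ρ1, ρ2} by
        obtain ⟨a, b, hab⟩ := Submodule.mem_span_pair.1 hs
        exact ⟨a, b, hab.symm⟩
      have hsum : ρ = ∑ k ∈ Finset.range (∑ i, (ρ i).totalDegree + 1),
          fun i => homogeneousComponent k (ρ i) := by
        ext1 i
        rw [Finset.sum_apply]
        conv_lhs => rw [← sum_homogeneousComponent (ρ i)]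
        refine Finset.sum_subset ?_ ?_
        · intro k hk
          rw [Finset.mem_range] at hk ⊢
          have := Finset.single_le_sum (f := fun i => (ρ i).totalDegree)
            (fun _ _ => Nat.zero_le _) (Finset.mem_univ i)
          omega
        · intro k _ hk
          rw [Finset.mem_range] at hk
          exact homogeneousComponent_eq_zero _ _ (by omega)
      rw [hsum]
      refine Submodule.sum_mem _ fun k _ => ?_
      have hkAR := aux_AR_comp f hf ρ hρ k
      have hkdet : (EMat ρ1 ρ2 fun i => homogeneousComponent k (ρ i)).det = 0 := by
        rw [aux_EMat_lin] at hdet ⊢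
        refine aux_sum_comp (m := 1 + e1 + e2 + 0) _ ρ (fun i => aux_EMat_homog h1h h2h ?_) hdet k
        intro j
        by_cases hj : j = i
        · subst hj
          rw [Pi.single_eq_same]
          exact isHomogeneous_one _ _
        · rw [Pi.single_eq_of_ne hj]
          exact isHomogeneous_zero _ _ _
      obtain ⟨a, b, hab⟩ := htame _ hkAR k (fun i => homogeneousComponent_isHomogeneous k _)
        (aux_minors f hd hf hf0 h1 h2 hkAR hkdet)
      exact Submodule.mem_span_pair.2 ⟨a, b, hab.symm⟩
    · rintro ⟨a, b, rfl⟩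
      have h0 : (EMat ρ1 ρ2 (a • ρ1 + b • ρ2)).det = 0 := by
        simp [EMat, Matrix.det_succ_row_zero, Fin.sum_univ_succ, Fin.succAbove]
        ring
      rw [h0] at hdet
      exact (mul_eq_zero.1 hdet.symm).resolve_right hf0
end
end
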